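/- arXiv:2502.17707 — 17 statements merged into one kernel-verified Lean document; each statement's English description precedes it below -/
import Mathlib

section
/- Let X be a locally Hausdorff, everywhere non-Hausdorff topological space, let κ be a cardinal with κ ≥ ℵ₁, let U ⊆ X be an open subset that is Hausdorff in the subspace topology, let A ⊆ U be κ-Baire in X, and let S be a scan of A in X. Then for every family {V_i}_{i ∈ I} of open Hausdorff subsets of X with |I| < κ, S is not contained in ⋃_{i∈I} V_i. -/
open Set Topology TopologicalSpace

universe u

/-- Two points are inseparable (`x ⋈ y`): distinct, and every open set containing
one meets every open set containing the other. -/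
def Bump {X : Type u} [TopologicalSpace X] (x y : X) : Prop :=
  x ≠ y ∧ ∀ U V : Set X, IsOpen U → IsOpen V → x ∈ U → y ∈ V → (U ∩ V).Nonempty

/-- `NH A` = points inseparable from some point of `A`. -/
def NH {X : Type u} [TopologicalSpace X] (A : Set X) : Set X :=
  {y | ∃ x ∈ A, Bump y x}

/-- `NHpt x = NH {x}`. -/
def NHpt {X : Type u} [TopologicalSpace X] (x : X) : Set X := NH {x}

/-- An Euclidean subset: open and homeomorphic to ℝⁿ. -/
def IsEuclidean {X : Type u} [TopologicalSpace X] (n : ℕ) (U : Set X) : Prop :=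
  IsOpen U ∧ Nonempty (U ≃ₜ EuclideanSpace ℝ (Fin n))

/-- An `n`-manifold: nonempty connected space, every point has an open
neighborhood homeomorphic to ℝⁿ (Hausdorffness NOT assumed). -/
def IsNManifold (X : Type u) [TopologicalSpace X] (n : ℕ) : Prop :=
  ConnectedSpace X ∧ ∀ x : X, ∃ U : Set X, x ∈ U ∧ IsEuclidean n U

/-- Locally Hausdorff space. -/
def LocallyHausdorff (X : Type u) [TopologicalSpace X] : Prop :=
  ∀ x : X, ∃ U : Set X, IsOpen U ∧ x ∈ U ∧ T2Space U

/-- Quasi-countably-compact subset: every countable open cover has a finite subcover. -/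
def QuasiCountablyCompact {X : Type u} [TopologicalSpace X] (K : Set X) : Prop :=
  ∀ U : ℕ → Set X, (∀ n, IsOpen (U n)) → K ⊆ ⋃ n, U n →
    ∃ s : Finset ℕ, K ⊆ ⋃ n ∈ s, U n

/-- `A` is `κ`-Baire in `X`: not covered by fewer than `κ` nowhere dense sets. -/
def KappaBaire {X : Type u} [TopologicalSpace X] (κ : Cardinal.{u}) (A : Set X) : Prop :=
  ∀ (ι : Type u) (F : ι → Set X), Cardinal.mk ι < κ →
    (∀ i, IsNowhereDense (F i)) → ¬ A ⊆ ⋃ i, F i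

/-- `S` is a scan of `A` in `X`. -/
def IsScan {X : Type u} [TopologicalSpace X] (S A : Set X) : Prop :=
  S ⊆ NH A ∧ ∀ x ∈ A, ((NHpt x).Nonempty ↔ (NHpt x ∩ S).Nonempty)

/-- `U` is sorted: a continuous map from `closure U` to a Hausdorff space,
injective on `U`. -/
def IsSorted {X : Type u} [TopologicalSpace X] (U : Set X) : Prop :=
  ∃ (H : Type u) (tH : TopologicalSpace H) (f : closure U → H),
    @T2Space H tH ∧ @Continuous _ H _ tH f ∧
      ∀ a b : closure U, (a : X) ∈ U → (b : X) ∈ U → f a = f b → a = b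

/-- `U` is weakly sorted: a continuous map from `closure U` to a Hausdorff space,
finite-to-one on `U`. -/
def IsWeaklySorted {X : Type u} [TopologicalSpace X] (U : Set X) : Prop :=
  ∃ (H : Type u) (tH : TopologicalSpace H) (f : closure U → H),
    @T2Space H tH ∧ @Continuous _ H _ tH f ∧
      ∀ h : H, {a : closure U | (a : X) ∈ U ∧ f a = h}.Finite

/-- H-maximal: open Hausdorff, with no open Hausdorff proper superset. -/
def IsHMaximal {X : Type u} [TopologicalSpace X] (U : Set X) : Prop :=
  IsOpen U ∧ T2Space U ∧
    ∀ V : Set X, IsOpen V → T2Space V → U ⊆ V → V = U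

/-- CH-maximal: connected open Hausdorff, with no connected open Hausdorff
proper superset. -/
def IsCHMaximal {X : Type u} [TopologicalSpace X] (U : Set X) : Prop :=
  IsConnected U ∧ IsOpen U ∧ T2Space U ∧
    ∀ V : Set X, IsConnected V → IsOpen V → T2Space V → U ⊆ V → V = U

/-- `U` is f-simple at `p`: every open `V ∋ p` contains an open `W ∋ p` such that
`W ∩ U` has finitely many connected components. -/
def FSimpleAt {X : Type u} [TopologicalSpace X] (U : Set X) (p : X) : Prop :=
  ∀ V : Set X, IsOpen V → p ∈ V → ∃ W : Set X, IsOpen W ∧ p ∈ W ∧ W ⊆ V ∧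
    {C : Set X | ∃ z ∈ W ∩ U, C = connectedComponentIn (W ∩ U) z}.Finite

/-- f-rim-simple: f-simple at every boundary point. -/
def FRimSimple {X : Type u} [TopologicalSpace X] (U : Set X) : Prop :=
  ∀ p ∈ closure U \ U, FSimpleAt U p

/-- cov(ℳ): least cardinality of a family of nowhere dense subsets of ℝ covering ℝ. -/
noncomputable def covMeager : Cardinal :=
  sInf {c : Cardinal | ∃ (ι : Type) (F : ι → Set ℝ),
    Cardinal.mk ι = c ∧ (∀ i, IsNowhereDense (F i)) ∧ ⋃ i, F i = Set.univ}

/-- A locally compact first countable S-space: Hausdorff, regular, locally compact,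
first countable, hereditarily separable, not Lindelöf. -/
def IsLCFCSSpace (S : Type) [TopologicalSpace S] : Prop :=
  T2Space S ∧ RegularSpace S ∧ LocallyCompactSpace S ∧
    FirstCountableTopology S ∧ (∀ A : Set S, SeparableSpace A) ∧ ¬ LindelofSpace S

/-- In a locally Hausdorff everywhere non-Hausdorff space, a scan of a
`κ`-Baire subset of an open Hausdorff set cannot be covered by fewer than `κ` open
Hausdorff sets. -/
theorem stmt1 {X : Type u} [TopologicalSpace X]
    (hLH : LocallyHausdorff X) (hENH : ∀ x : X, (NHpt x).Nonempty)
    (κ : Cardinal.{u}) (hκ : Cardinal.aleph 1 ≤ κ)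
    (U : Set X) (hUopen : IsOpen U) (hUT2 : T2Space U)
    (A : Set X) (hAU : A ⊆ U) (hA : KappaBaire κ A)
    (S : Set X) (hS : IsScan S A)
    (ι : Type u) (V : ι → Set X) (hcard : Cardinal.mk ι < κ)
    (hV : ∀ i, IsOpen (V i) ∧ T2Space (V i)) :
    ¬ S ⊆ ⋃ i, V i := by
  intro hcov
  refine hA ι (fun i => frontier (V i)) hcard (fun i => ?_) ?_
  · have h1 : IsClosed (frontier (V i)) := isClosed_frontier
    rw [h1.isNowhereDense_iff]
    rw [← frontier_compl]
    exact interior_frontier (hV i).1.isClosed_compl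
  · intro x hx
    obtain ⟨y, ⟨x', hx', hne, hb⟩, hyS⟩ := (hS.2 x hx).1 (hENH x)
    obtain rfl : x' = x := hx'
    obtain ⟨i, hi⟩ := mem_iUnion.1 (hcov hyS)
    refine mem_iUnion.2 ⟨i, ?_⟩
    obtain ⟨ho, hT⟩ := hV i
    change x' ∈ frontier (V i)
    rw [ho.frontier_eq]
    refine ⟨mem_closure_iff.2 fun o hoo hxo => ?_, fun hxV => ?_⟩
    · obtain ⟨z, hz1, hz2⟩ := hb (V i) o ho hoo hi hxo
      exact ⟨z, hz2, hz1⟩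
    · obtain ⟨P, Q, hP, hQ, hyP, hxQ, hd⟩ :=
        t2_separation (X := V i) (x := ⟨y, hi⟩) (y := ⟨x', hxV⟩)
          (fun h => hne (congrArg Subtype.val h))
      obtain ⟨z, ⟨a, ha, rfl⟩, ⟨b, hb', hab⟩⟩ :=
        hb _ _ (ho.isOpenMap_subtype_val P hP) (ho.isOpenMap_subtype_val Q hQ)
          ⟨_, hyP, rfl⟩ ⟨_, hxQ, rfl⟩
      obtain rfl : b = a := Subtype.ext hab
      exact Set.disjoint_left.1 hd ha hb'
end

section
/- Let M be an everywhere non-Hausdorff n-manifold, let κ ≥ ℵ₁ be a cardinal, let U ⊆ M be an Euclidean subset, let A ⊆ U be κ-Baire in M, let S be a scan of A in M, let E ⊆ U be dense in U, and let λ < κ be a cardinal. Then there is no family 𝒱 of open Hausdorff subsets of M which covers S and is point-λ on E. -/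
open Set Topology TopologicalSpace

universe u

/-- No cover of a scan `S` by open Hausdorff sets is point-`λ` on a
dense subset `E` of the Euclidean set `U`, for `λ < κ`. -/
theorem stmt2 {M : Type u} [TopologicalSpace M] (n : ℕ)
    (hM : IsNManifold M n) (hENH : ∀ x : M, (NHpt x).Nonempty)
    (κ : Cardinal.{u}) (hκ : Cardinal.aleph 1 ≤ κ)
    (U : Set M) (hU : IsEuclidean n U)
    (A : Set M) (hAU : A ⊆ U) (hA : KappaBaire κ A)
    (S : Set M) (hS : IsScan S A)
    (E : Set M) (hEU : E ⊆ U) (hEdense : U ⊆ closure E)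
    (lam : Cardinal.{u}) (hlam : lam < κ)
    (𝒱 : Set (Set M)) (h𝒱 : ∀ V ∈ 𝒱, IsOpen V ∧ T2Space V) :
    ¬ (S ⊆ ⋃₀ 𝒱 ∧ ∀ x ∈ E, Cardinal.mk {V ∈ 𝒱 | x ∈ V} ≤ lam) := by
  rintro ⟨hcov, hpt⟩
  obtain ⟨hUo, ⟨φ⟩⟩ := hU
  haveI : SecondCountableTopology U := φ.isEmbedding.secondCountableTopology
  haveI : SecondCountableTopology E :=
    (IsEmbedding.inclusion hEU).secondCountableTopology
  obtain ⟨D, hDc, hDd⟩ := TopologicalSpace.exists_countable_dense E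
  have hUD : U ⊆ closure (Subtype.val '' D : Set M) := by
    have h1 : E ⊆ closure (Subtype.val '' D : Set M) := by
      intro e he
      have h2 : (⟨e, he⟩ : E) ∈ closure D := hDd _
      exact closure_subtype.1 h2
    exact hEdense.trans (closure_minimal h1 isClosed_closure)
  let W : Set (Set M) := ⋃ d : D, {V ∈ 𝒱 | (d : E).1 ∈ V}
  have hW : Cardinal.mk W < κ := by
    have hal : Cardinal.aleph0 < κ := by
      refine lt_of_lt_of_le ?_ hκ
      exact Cardinal.aleph0_lt_aleph_one
    refine lt_of_le_of_lt ?_ (max_lt hal hlam)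
    have h1 : Cardinal.mk W ≤ Cardinal.mk D * ⨆ d : D, Cardinal.mk {V ∈ 𝒱 | (d : E).1 ∈ V} :=
      Cardinal.mk_iUnion_le _
    have hD : Cardinal.mk D ≤ Cardinal.aleph0 := by
      haveI := hDc.to_subtype
      exact Cardinal.mk_le_aleph0
    have h2 : (⨆ d : D, Cardinal.mk {V ∈ 𝒱 | (d : E).1 ∈ V}) ≤ max Cardinal.aleph0 lam :=
      ciSup_le' fun d => (hpt _ d.1.2).trans (le_max_right _ _)
    calc _ ≤ _ := h1
      _ ≤ max Cardinal.aleph0 lam * max Cardinal.aleph0 lam :=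
        mul_le_mul' (hD.trans (le_max_left _ _)) h2
      _ = _ := Cardinal.mul_eq_self (le_max_left _ _)
  refine hA W (fun V => frontier V.1) hW ?_ ?_
  · rintro ⟨V, hV⟩
    obtain ⟨d, hV', -⟩ := mem_iUnion.1 hV
    have ho := (h𝒱 V hV').1
    change interior (closure (frontier V)) = ∅
    rw [isClosed_frontier.closure_eq, ← frontier_compl]
    exact interior_frontier ho.isClosed_compl
  · intro x hx
    obtain ⟨s, ⟨x', rfl, hne, hb⟩, hsS⟩ := (hS.2 x hx).1 (hENH x)
    obtain ⟨V, hV, hsV⟩ := hcov hsS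
    obtain ⟨ho, hT2⟩ := h𝒱 V hV
    obtain ⟨y, hyV, hyU⟩ := hb V U ho hUo hsV (hAU hx)
    obtain ⟨_, ⟨hdV, -⟩, ⟨d, hdD, rfl⟩⟩ :=
      mem_closure_iff.1 (hUD hyU) (V ∩ U) (ho.inter hUo) ⟨hyV, hyU⟩
    refine mem_iUnion.2 ⟨⟨V, mem_iUnion.2 ⟨⟨d, hdD⟩, hV, hdV⟩⟩, ?_⟩
    change x' ∈ frontier V
    rw [ho.frontier_eq]
    refine ⟨mem_closure_iff.2 fun O hO hxO => ?_, fun hxV => ?_⟩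
    · rw [inter_comm]
      exact hb V O ho hO hsV hxO
    · obtain ⟨P, Q, hP, hQ, hsP, hxQ, hd⟩ :=
        t2_separation (X := V) (x := ⟨s, hsV⟩) (y := ⟨x', hxV⟩)
          (fun h => hne (congrArg Subtype.val h))
      obtain ⟨z, ⟨p, hp, hpz⟩, ⟨q, hq, hqz⟩⟩ := hb _ _ (ho.isOpenMap_subtype_val P hP)
        (ho.isOpenMap_subtype_val Q hQ) ⟨_, hsP, rfl⟩ ⟨_, hxQ, rfl⟩
      have : p = q := Subtype.ext (hpz.trans hqz.symm)
      subst this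
      exact disjoint_left.1 hd hp hq
end

section
/- Let M be an everywhere non-Hausdorff n-manifold, let κ ≥ ℵ₁ be a cardinal, let U ⊆ M be an Euclidean subset, let A ⊆ U be κ-Baire in M, and let S be a scan of A in M. Then S is not contained in the union of any family {K_i}_{i∈I} of subsets of M with |I| < κ such that each K_i is either quasi-compact, or quasi-countably compact with NH(K_i) ∩ K_i = ∅. -/
open Set Topology TopologicalSpace

universe u

theorem Bump.symm' {X : Type u} [TopologicalSpace X] {x y : X} (h : Bump x y) : Bump y x :=
  ⟨h.1.symm, fun U V hU hV hx hy => by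
    rw [inter_comm]; exact h.2 V U hV hU hy hx⟩

theorem euclid_not_bump {X : Type u} [TopologicalSpace X] {n : ℕ} {V : Set X}
    (hV : IsEuclidean n V) {x y : X} (hx : x ∈ V) (hy : y ∈ V) : ¬ Bump x y := by
  obtain ⟨ho, ⟨e⟩⟩ := hV
  haveI : T2Space V := e.symm.t2Space
  intro h
  have hne : (⟨x, hx⟩ : V) ≠ ⟨y, hy⟩ := fun h' => h.1 (congrArg Subtype.val h')
  obtain ⟨P, Q, hP, hQ, hxP, hyQ, hd⟩ := t2_separation hne
  obtain ⟨z, ⟨p, hp, rfl⟩, ⟨q, hq, hpq⟩⟩ := h.2 (Subtype.val '' P) (Subtype.val '' Q)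
    (ho.isOpenMap_subtype_val _ hP) (ho.isOpenMap_subtype_val _ hQ) ⟨_, hxP, rfl⟩ ⟨_, hyQ, rfl⟩
  have : q = p := Subtype.ext hpq
  subst this
  exact disjoint_left.1 hd hp hq

theorem euclid_nhds_cg {X : Type u} [TopologicalSpace X] {n : ℕ} {V : Set X}
    (hV : IsEuclidean n V) {x : X} (hx : x ∈ V) : (𝓝 x).IsCountablyGenerated := by
  obtain ⟨ho, ⟨e⟩⟩ := hV
  haveI : FirstCountableTopology V := e.isInducing.firstCountableTopology
  have := ho.isOpenEmbedding_subtypeVal.map_nhds_eq ⟨x, hx⟩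
  rw [← this]
  infer_instance

theorem nd_compact {X : Type u} [TopologicalSpace X] {n : ℕ} (hM : IsNManifold X n)
    {K : Set X} (hK : IsCompact K) : IsNowhereDense (NH K) := by
  choose V hxV hV using hM.2
  obtain ⟨t, -, ht⟩ := hK.elim_nhds_subcover V (fun x _ => (hV x).1.mem_nhds (hxV x))
  have key : ∀ t : Finset X, IsClosed (⋃ x ∈ t, frontier (V x)) ∧
      interior (⋃ x ∈ t, frontier (V x)) = ∅ := by
    intro t
    classical
    induction t using Finset.induction_on with
    | empty => simp
    | insert a s _ ih =>
      rw [Finset.set_biUnion_insert]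
      refine ⟨isClosed_frontier.union ih.1, ?_⟩
      rw [interior_union_isClosed_of_interior_empty isClosed_frontier ih.2]
      rw [← frontier_compl]; exact interior_frontier (hV a).1.isClosed_compl
  have hsub : NH K ⊆ ⋃ x ∈ t, frontier (V x) := by
    rintro x ⟨y, hy, hb⟩
    obtain ⟨a, ha, hya⟩ := mem_iUnion₂.1 (ht hy)
    refine mem_iUnion₂.2 ⟨a, ha, ?_⟩
    rw [(hV a).1.frontier_eq]
    refine ⟨mem_closure_iff.2 fun o ho hxo => hb.2 o _ ho (hV a).1 hxo hya, fun hxa =>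
      euclid_not_bump (hV a) hxa hya hb⟩
  have h2 := closure_minimal hsub (key t).1
  exact subset_empty_iff.1 ((interior_mono h2).trans (key t).2.subset)

theorem qcc_cluster {X : Type u} [TopologicalSpace X] {K : Set X}
    (hK : QuasiCountablyCompact K) (y : ℕ → X) (hy : ∀ i, y i ∈ K) :
    ∃ z ∈ K, ∀ m, z ∈ closure (y '' Ici m) := by
  by_contra! h
  obtain ⟨s, hs⟩ := hK (fun m => (closure (y '' Ici m))ᶜ)
    (fun m => isClosed_closure.isOpen_compl)
    (fun z hz => mem_iUnion.2 (h z hz))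
  obtain ⟨m, hm, hz⟩ := mem_iUnion₂.1 (hs (hy (s.sup id)))
  exact hz (subset_closure ⟨_, Finset.le_sup (f := id) hm, rfl⟩)

theorem nd_qcc {X : Type u} [TopologicalSpace X] {n : ℕ} (hM : IsNManifold X n)
    {K : Set X} (hK : QuasiCountablyCompact K) (hKK : NH K ∩ K = ∅) :
    IsNowhereDense (NH K) := by
  by_contra hne
  obtain ⟨w, hw⟩ := nonempty_iff_ne_empty.2 hne
  obtain ⟨x, hxW, y, hyK, hxy⟩ := mem_closure_iff.1 (interior_subset hw) _ isOpen_interior hw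
  have hycl : y ∈ closure (NH K) := by
    refine mem_closure_iff.2 fun o ho hyo => ?_
    obtain ⟨p, hpW, hpo⟩ := hxy.2 _ o isOpen_interior ho hxW hyo
    exact mem_closure_iff.1 (interior_subset hpW) o ho hpo
  obtain ⟨V, hyV, hV⟩ := hM.2 y
  haveI := euclid_nhds_cg hV hyV
  obtain ⟨B, hB⟩ := (𝓝 y).exists_antitone_basis
  have hex : ∀ i, ∃ a, a ∈ B i ∧ ∃ b ∈ K, Bump a b := by
    intro i
    obtain ⟨a, ha, hb⟩ := mem_closure_iff_nhds.1 hycl (B i) (hB.1.mem_of_mem trivial)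
    exact ⟨a, ha, hb⟩
  choose a ha b hbK hab using hex
  obtain ⟨z, hzK, hz⟩ := qcc_cluster hK b hbK
  have hz' : ∀ o, IsOpen o → z ∈ o → ∀ m, ∃ i ≥ m, b i ∈ o := by
    intro o ho hzo m
    obtain ⟨_, h1, i, hi, rfl⟩ := mem_closure_iff.1 (hz m) o ho hzo
    exact ⟨i, hi, h1⟩
  have ha' : ∀ o, IsOpen o → y ∈ o → ∃ m, ∀ i ≥ m, a i ∈ o := by
    intro o ho hyo
    obtain ⟨m, -, hm⟩ := hB.1.mem_iff.1 (ho.mem_nhds hyo)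
    exact ⟨m, fun i hi => hm (hB.2 hi (ha i))⟩
  have hzy : z = y := by
    by_contra hzy
    have : z ∈ NH K ∩ K := by
      refine ⟨⟨y, hyK, hzy, fun P Q hP hQ hzP hyQ => ?_⟩, hzK⟩
      obtain ⟨m, hm⟩ := ha' Q hQ hyQ
      obtain ⟨i, hi, hbi⟩ := hz' P hP hzP m
      rw [inter_comm]
      exact (hab i).2 Q P hQ hP (hm i hi) hbi
    rw [hKK] at this
    exact this
  subst hzy
  obtain ⟨m, hm⟩ := ha' V hV.1 hyV
  obtain ⟨i, hi, hbi⟩ := hz' V hV.1 hyV m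
  exact euclid_not_bump hV (hm i hi) hbi (hab i)

/-- A scan `S` of a `κ`-Baire subset of a Euclidean subset of an
everywhere non-Hausdorff manifold cannot be covered by fewer than `κ` sets, each
quasi-compact or quasi-countably compact with `NH(K) ∩ K = ∅`. -/
theorem stmt3 {M : Type u} [TopologicalSpace M] (n : ℕ)
    (hM : IsNManifold M n) (hENH : ∀ x : M, (NHpt x).Nonempty)
    (κ : Cardinal.{u}) (hκ : Cardinal.aleph 1 ≤ κ)
    (U : Set M) (hU : IsEuclidean n U)
    (A : Set M) (hAU : A ⊆ U) (hA : KappaBaire κ A)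
    (S : Set M) (hS : IsScan S A)
    (ι : Type u) (K : ι → Set M) (hcard : Cardinal.mk ι < κ)
    (hK : ∀ i, IsCompact (K i) ∨
      (QuasiCountablyCompact (K i) ∧ NH (K i) ∩ K i = ∅)) :
    ¬ S ⊆ ⋃ i, K i := by
  intro hsub
  refine hA ι (fun i => NH (K i)) hcard (fun i => ?_) ?_
  · rcases hK i with h | ⟨h1, h2⟩
    · exact nd_compact hM h
    · exact nd_qcc hM h1 h2
  · intro x hx
    obtain ⟨y, ⟨x', hx', hb⟩, hyS⟩ := (hS.2 x hx).1 (hENH x)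
    obtain rfl : x' = x := hx'
    obtain ⟨i, hi⟩ := mem_iUnion.1 (hsub hyS)
    exact mem_iUnion.2 ⟨i, y, hi, hb.symm'⟩
end

section
/- Suppose there exists a hereditarily separable, everywhere non-Hausdorff n-manifold M with a nonempty sorted open Hausdorff subset U such that NH(x) is a singleton for every x ∈ U. Then there exists a topological space which is Hausdorff, regular, locally compact, first countable, hereditarily separable and not Lindelöf (i.e. a locally compact first countable S-space). -/
open Set Topology TopologicalSpace

universe u

theorem aux_locComp {n : ℕ} {M : Type} [TopologicalSpace M]
    (hM : IsNManifold M n) : LocallyCompactSpace M := by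
  refine ⟨fun x N hN => ?_⟩
  obtain ⟨V, hxV, hVo, ⟨e⟩⟩ := hM.2 x
  have : LocallyCompactSpace V := e.isClosedEmbedding.locallyCompactSpace
  have h1 : ((↑) : V → M) ⁻¹' N ∈ 𝓝 (⟨x, hxV⟩ : V) :=
    continuous_subtype_val.continuousAt.preimage_mem_nhds hN
  obtain ⟨L, hL, hLN, hLc⟩ := LocallyCompactSpace.local_compact_nhds _ _ h1
  refine ⟨((↑) : V → M) '' L, ?_, ?_, hLc.image continuous_subtype_val⟩
  · exact hVo.isOpenEmbedding_subtypeVal.isOpenMap.image_mem_nhds hL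
  · rintro _ ⟨v, hv, rfl⟩
    exact hLN hv

theorem aux_firstCount {n : ℕ} {M : Type} [TopologicalSpace M]
    (hM : IsNManifold M n) : FirstCountableTopology M := by
  refine ⟨fun x => ?_⟩
  obtain ⟨V, hxV, hVo, ⟨e⟩⟩ := hM.2 x
  have : FirstCountableTopology V := e.isInducing.firstCountableTopology
  have := hVo.isOpenEmbedding_subtypeVal.map_nhds_eq (⟨x, hxV⟩ : V)
  rw [← this]
  infer_instance

theorem aux_not {M : Type} [TopologicalSpace M] {U : Set M} (hU : IsOpen U)
    (hUT2 : T2Space U) {y x : M} (hx : x ∈ U) (hb : Bump y x) : y ∉ U := by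
  intro hy
  have hne : (⟨y, hy⟩ : U) ≠ ⟨x, hx⟩ := fun h => hb.1 (congrArg Subtype.val h)
  obtain ⟨A, B, hA, hB, hyA, hxB, hAB⟩ := t2_separation hne
  obtain ⟨z, ⟨a, ha, haz⟩, ⟨b, hb', hbz⟩⟩ := hb.2 _ _ (hU.isOpenMap_subtype_val _ hA)
    (hU.isOpenMap_subtype_val _ hB) ⟨_, hyA, rfl⟩ ⟨_, hxB, rfl⟩
  have : a = b := Subtype.ext (haz.trans hbz.symm)
  subst this
  exact Set.disjoint_left.1 hAB ha hb'

theorem aux_closed {M : Type} [TopologicalSpace M] {U K : Set M} (hU : IsOpen U)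
    (hUT2 : T2Space U) (hK : IsCompact K) (hKU : K ⊆ U) : IsClosed (NH K) := by
  have hnot := fun y x => aux_not hU hUT2 (y := y) (x := x)
  rw [← isOpen_compl_iff, isOpen_iff_mem_nhds]
  intro y hy
  by_cases hyU : y ∈ U
  · refine Filter.mem_of_superset (hU.mem_nhds hyU) ?_
    rintro z hz ⟨x, hx, hb⟩
    exact hnot z x (hKU hx) hb hz
  · refine hK.induction_on (p := fun s => (NH s)ᶜ ∈ 𝓝 y) ?_ ?_ ?_ ?_
    · refine Filter.mem_of_superset Filter.univ_mem ?_
      rintro z - ⟨x, hx, -⟩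
      exact hx
    · intro s t hst ht
      refine Filter.mem_of_superset ht ?_
      rintro z hz ⟨x, hx, hb⟩
      exact hz ⟨x, hst hx, hb⟩
    · intro s t hs ht
      filter_upwards [hs, ht] with z h1 h2
      rintro ⟨x, hx | hx, hb⟩
      · exact h1 ⟨x, hx, hb⟩
      · exact h2 ⟨x, hx, hb⟩
    · intro x hx
      have hne : y ≠ x := fun h => hyU (h ▸ hKU hx)
      have hnb : ¬ Bump y x := fun h => hy ⟨x, hx, h⟩
      have : ∃ A B : Set M, IsOpen A ∧ IsOpen B ∧ y ∈ A ∧ x ∈ B ∧ ¬ (A ∩ B).Nonempty := by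
        by_contra hcon
        refine hnb ⟨hne, fun A B hA hB hyA hxB => ?_⟩
        by_contra h
        exact hcon ⟨A, B, hA, hB, hyA, hxB, h⟩
      obtain ⟨A, B, hA, hB, hyA, hxB, hAB⟩ := this
      refine ⟨B, mem_nhdsWithin_of_mem_nhds (hB.mem_nhds hxB),
        Filter.mem_of_superset (hA.mem_nhds hyA) ?_⟩
      rintro z hz ⟨w, hw, hb⟩
      exact hAB (hb.2 A B hA hB hz hw)

theorem aux_f {M : Type} [TopologicalSpace M] {U : Set M} (hU : IsOpen U)
    {H : Type} [TopologicalSpace H] [T2Space H] {f : closure U → H} (hf : Continuous f)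
    {y x : M} (hx : x ∈ U) (hb : Bump y x) (hy : y ∈ closure U) :
    f ⟨y, hy⟩ = f ⟨x, subset_closure hx⟩ := by
  by_contra hne
  obtain ⟨A, B, hA, hB, hyA, hxB, hAB⟩ := t2_separation hne
  obtain ⟨A', hA', hAA⟩ := isOpen_induced_iff.1 (hA.preimage hf)
  obtain ⟨B', hB', hBB⟩ := isOpen_induced_iff.1 (hB.preimage hf)
  have h1 : y ∈ A' := by
    have : (⟨y, hy⟩ : closure U) ∈ Subtype.val ⁻¹' A' := by rw [hAA]; exact hyA
    exact this
  have h2 : x ∈ B' := by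
    have : (⟨x, subset_closure hx⟩ : closure U) ∈ Subtype.val ⁻¹' B' := by rw [hBB]; exact hxB
    exact this
  obtain ⟨z, hzA, hzB, hzU⟩ := hb.2 A' (B' ∩ U) hA' (hB'.inter hU) h1 ⟨h2, hx⟩
  have h3 : (⟨z, subset_closure hzU⟩ : closure U) ∈ f ⁻¹' A := by rw [← hAA]; exact hzA
  have h4 : (⟨z, subset_closure hzU⟩ : closure U) ∈ f ⁻¹' B := by rw [← hBB]; exact hzB
  exact Set.disjoint_left.1 hAB h3 h4

/-- If there is a hereditarily separable everywhere non-Hausdorff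
manifold with a nonempty sorted open Hausdorff subset `U` on which each `NH(x)` is
a singleton, then there is a locally compact first countable S-space. -/
theorem stmt5 (n : ℕ) (M : Type) [TopologicalSpace M]
    (hM : IsNManifold M n)
    (hHS : ∀ A : Set M, SeparableSpace A)
    (hENH : ∀ x : M, (NHpt x).Nonempty)
    (U : Set M) (hUne : U.Nonempty) (hUopen : IsOpen U) (hUT2 : T2Space U)
    (hUsorted : IsSorted U)
    (hsingle : ∀ x ∈ U, ∃ y, NHpt x = {y}) :
    ∃ (S : Type) (tS : TopologicalSpace S), @IsLCFCSSpace S tS := by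
  have := aux_locComp hM
  have := aux_firstCount hM
  obtain ⟨x₀, hx₀⟩ := hUne
  obtain ⟨K, hK, hKU, hKc⟩ := LocallyCompactSpace.local_compact_nhds x₀ U (hUopen.mem_nhds hx₀)
  have hScl : IsClosed (NH K) := aux_closed hUopen hUT2 hKc hKU
  obtain ⟨H, tH, f, hT2, hf, hinj⟩ := hUsorted
  have hcl : ∀ y ∈ NH K, y ∈ closure U := by
    rintro y ⟨x, hx, hb⟩
    rw [mem_closure_iff]
    intro A hA hyA
    exact hb.2 A U hA hUopen hyA (hKU hx)
  have hST2 : T2Space (NH K) := by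
    refine T2Space.of_injective_continuous (f := fun y : NH K => f ⟨y.1, hcl y.1 y.2⟩) ?_ ?_
    · rintro ⟨y, hy⟩ ⟨y', hy'⟩ h
      have hc := hcl y hy
      have hc' := hcl y' hy'
      obtain ⟨x, hx, hb⟩ := hy
      obtain ⟨x', hx', hb'⟩ := hy'
      have e1 := aux_f hUopen hf (hKU hx) hb hc
      have e2 := aux_f hUopen hf (hKU hx') hb' hc'
      have e3 := hinj _ _ (hKU hx) (hKU hx') (e1.symm.trans (h.trans e2))
      have e4 : x = x' := congrArg Subtype.val e3
      subst e4
      obtain ⟨w, hw⟩ := hsingle x (hKU hx)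
      have m1 : y ∈ NHpt x := ⟨x, rfl, hb⟩
      have m2 : y' ∈ NHpt x := ⟨x, rfl, hb'⟩
      rw [hw] at m1 m2
      exact Subtype.ext (m1.trans m2.symm)
    · exact hf.comp (continuous_subtype_val.subtype_mk _)
  have : LocallyCompactSpace (NH K) := hScl.isClosedEmbedding_subtypeVal.locallyCompactSpace
  refine ⟨NH K, inferInstance, hST2, inferInstance, inferInstance, inferInstance, ?_, ?_⟩
  · intro A
    have := hHS (Subtype.val '' A)
    have e : A ≃ₜ (Subtype.val '' A : Set M) :=
      (IsEmbedding.subtypeVal.homeomorphImage A)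
    exact e.symm.surjective.denseRange.separableSpace e.symm.continuous
  · intro hL
    choose V hxV hV using hM.2
    have hVT2 : ∀ x, T2Space (V x) := fun x => by
      obtain ⟨-, ⟨e⟩⟩ := hV x
      exact e.isEmbedding.t2Space
    obtain ⟨c, hc, hcov⟩ := LindelofSpace.isLindelof_univ.elim_countable_subcover
      (fun y : NH K => (Subtype.val ⁻¹' V y.1 : Set (NH K)))
      (fun y => (hV y.1).1.preimage continuous_subtype_val)
      (fun y _ => mem_iUnion.2 ⟨y, hxV y.1⟩)
    have hWo : IsOpen (interior K) := isOpen_interior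
    have hWU : interior K ⊆ U := interior_subset.trans hKU
    have : T2Space (interior K) := (IsEmbedding.inclusion hWU).t2Space
    have : LocallyCompactSpace (interior K) := hWo.locallyCompactSpace
    have : Nonempty (interior K) := ⟨⟨x₀, mem_interior_iff_mem_nhds.2 hK⟩⟩
    have : Countable c := hc.to_subtype
    obtain ⟨⟨k, hk⟩, ⟨w, hw⟩⟩ := nonempty_interior_of_iUnion_of_closed (X := interior K)
      (f := fun k : c => closure {w : interior K | ∃ y ∈ V k.1.1, Bump y w.1})
      (fun _ => isClosed_closure) (by
        refine eq_univ_of_forall fun w => ?_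
        obtain ⟨y, z, hz, hb⟩ := hENH w.1
        obtain rfl : z = w.1 := hz
        have hyS : y ∈ NH K := ⟨w.1, interior_subset w.2, hb⟩
        obtain ⟨k, hk, hyk⟩ := mem_iUnion₂.1 (hcov (mem_univ (⟨y, hyS⟩ : NH K)))
        exact mem_iUnion.2 ⟨⟨k, hk⟩, subset_closure ⟨y, hyk, hb⟩⟩)
    set A : Set (interior K) := {w : interior K | ∃ y ∈ V k.1, Bump y w.1} with hA
    obtain ⟨a, ha, y, hy, hb⟩ := mem_closure_iff.1 (interior_subset hw) _ isOpen_interior hw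
    obtain ⟨z, hzV, ⟨b, hbI, rfl⟩⟩ := hb.2 (V k.1) (Subtype.val '' interior (closure A)) (hV k.1).1
      (hWo.isOpenMap_subtype_val _ isOpen_interior) hy ⟨a, ha, rfl⟩
    obtain ⟨d, hdV, y', hy', hb'⟩ := mem_closure_iff.1 (interior_subset hbI) (Subtype.val ⁻¹' V k.1)
      ((hV k.1).1.preimage continuous_subtype_val) hzV
    exact aux_not (hV k.1).1 (hVT2 k.1) hdV hb' hy'
end

section
/- Let M be an n-manifold, x ∈ M, and U a weakly sorted open Hausdorff subset of M with x ∈ U. Suppose that for every y ∈ NH(x) there exists a continuous map h : M → M such that h(y) = x and the restriction of h to {x} ∪ NH(x) is injective. Then NH(x) is a discrete subset of M. -/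
open Set Topology TopologicalSpace

universe u

theorem t1_of_manifold {M : Type u} [TopologicalSpace M] (n : ℕ) (hM : IsNManifold M n) :
    T1Space M := by
  rw [t1Space_iff_exists_open]
  intro p q hpq
  obtain ⟨V, hpV, hVo, ⟨e⟩⟩ := hM.2 p
  by_cases hq : q ∈ V
  · haveI : T1Space V := e.symm.t1Space
    refine ⟨Subtype.val '' ({⟨q, hq⟩}ᶜ : Set V),
      hVo.isOpenMap_subtype_val _ isOpen_compl_singleton, ?_, ?_⟩
    · exact ⟨⟨p, hpV⟩, fun h => hpq (congrArg Subtype.val h), rfl⟩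
    · rintro ⟨⟨q', hq'⟩, h1, h2⟩
      exact h1 (Subtype.ext h2)
  · exact ⟨V, hVo, hpV, hq⟩

theorem bump_closure {M : Type u} [TopologicalSpace M] {U : Set M} (hU : IsOpen U) {a b : M}
    (ha : a ∈ U) (h : Bump b a) : b ∈ closure U := by
  rw [mem_closure_iff]
  intro o ho hb
  exact h.2 o U ho hU hb ha

theorem bump_map_eq {M : Type u} [TopologicalSpace M] {U : Set M} (hU : IsOpen U)
    {H : Type u} [TopologicalSpace H] [T2Space H] {f : closure U → H} (hf : Continuous f)
    {a b : closure U} (ha : (a : M) ∈ U) (h : Bump (b : M) a) : f b = f a := by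
  by_contra hne
  obtain ⟨V, W, hV, hW, hbV, haW, hd⟩ := t2_separation hne
  obtain ⟨V', hV', hV'e⟩ := isOpen_induced_iff.1 (hV.preimage hf)
  obtain ⟨W', hW', hW'e⟩ := isOpen_induced_iff.1 (hW.preimage hf)
  have hb' : (b : M) ∈ V' := by
    have : b ∈ f ⁻¹' V := hbV
    rw [← hV'e] at this; exact this
  have ha' : (a : M) ∈ W' := by
    have : a ∈ f ⁻¹' W := haW
    rw [← hW'e] at this; exact this
  obtain ⟨z, hz1, hz2, hz3⟩ := h.2 V' (W' ∩ U) hV' (hW'.inter hU) hb' ⟨ha', ha⟩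
  have z1 : (⟨z, subset_closure hz3⟩ : closure U) ∈ f ⁻¹' V := by rw [← hV'e]; exact hz1
  have z2 : (⟨z, subset_closure hz3⟩ : closure U) ∈ f ⁻¹' W := by rw [← hW'e]; exact hz2
  exact Set.disjoint_left.1 hd z1 z2

theorem bump_image {M : Type u} [TopologicalSpace M] {h : M → M} (hc : Continuous h) {a b : M}
    (hab : Bump a b) (hne : h a ≠ h b) : Bump (h a) (h b) := by
  refine ⟨hne, fun V W hV hW ha hb => ?_⟩
  obtain ⟨z, hz1, hz2⟩ := hab.2 _ _ (hV.preimage hc) (hW.preimage hc) ha hb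
  exact ⟨h z, hz1, hz2⟩

theorem bump_symm {M : Type u} [TopologicalSpace M] {a b : M} (h : Bump a b) : Bump b a :=
  ⟨h.1.symm, fun V W hV hW hb ha => by
    rw [Set.inter_comm]; exact h.2 W V hW hV ha hb⟩

/-- If `x` lies in a weakly sorted open Hausdorff set and each
`y ∈ NH(x)` can be mapped to `x` by a continuous self-map injective on
`{x} ∪ NH(x)`, then `NH(x)` is discrete. -/
theorem stmt6 {M : Type u} [TopologicalSpace M] (n : ℕ) (hM : IsNManifold M n)
    (x : M) (U : Set M) (hUopen : IsOpen U) (hUT2 : T2Space U)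
    (hUws : IsWeaklySorted U) (hxU : x ∈ U)
    (hhom : ∀ y ∈ NHpt x, ∃ h : M → M, Continuous h ∧ h y = x ∧
      Set.InjOn h (insert x (NHpt x))) :
    DiscreteTopology (NHpt x) := by
  haveI := t1_of_manifold n hM
  obtain ⟨H, tH, f, hH, hf, hfin⟩ := hUws
  have hb : ∀ z ∈ NHpt x, Bump z x := by
    rintro z ⟨x', hx', hz⟩
    rw [Set.mem_singleton_iff] at hx'
    exact hx' ▸ hz
  rw [discreteTopology_iff_isOpen_singleton]
  rintro ⟨y, hy⟩
  obtain ⟨h, hc, hyx, hinj⟩ := hhom y hy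
  have hwx : Bump (h x) x := by
    have h1 := bump_image hc (bump_symm (hb y hy)) (fun e =>
      (hb y hy).1 (hinj (Set.mem_insert _ _) (Set.mem_insert_of_mem _ hy) e).symm)
    rwa [hyx] at h1
  have hwU := bump_closure hUopen hxU hwx
  have hFfin : (h ⁻¹' U ∩ NHpt x).Finite := by
    refine Set.Finite.of_finite_image (f := h) ?_
      (hinj.mono fun z hz => Set.mem_insert_of_mem _ hz.2)
    refine ((hfin (f ⟨h x, hwU⟩)).image Subtype.val).subset ?_
    rintro _ ⟨z, ⟨hzU, hz⟩, rfl⟩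
    refine ⟨⟨h z, subset_closure hzU⟩, ⟨hzU, ?_⟩, rfl⟩
    have h2 : Bump (h x) (h z) := bump_image hc (bump_symm (hb z hz)) (fun e =>
      (hb z hz).1 (hinj (Set.mem_insert _ _) (Set.mem_insert_of_mem _ hz) e).symm)
    exact (bump_map_eq hUopen hf (a := ⟨h z, subset_closure hzU⟩) (b := ⟨h x, hwU⟩) hzU h2).symm
  rw [isOpen_induced_iff]
  refine ⟨h ⁻¹' U \ ((h ⁻¹' U ∩ NHpt x) \ {y}),
    (hUopen.preimage hc).sdiff (hFfin.subset Set.diff_subset).isClosed, ?_⟩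
  ext ⟨z, hz⟩
  simp only [Set.mem_preimage, Set.mem_diff, Set.mem_inter_iff, Set.mem_singleton_iff,
    Subtype.mk.injEq]
  constructor
  · rintro ⟨h1, h2⟩
    by_contra h3
    exact h2 ⟨⟨h1, hz⟩, h3⟩
  · rintro rfl
    exact ⟨by rw [hyx]; exact hxU, fun h => h.2 rfl⟩
end

section
/- Let M be a 1-manifold and x ∈ M such that for all y₀, y₁ ∈ NH(x) there exists a homeomorphism h : M → M with h(x) = x and h(y₀) = y₁. Then NH(x) is a discrete subset of M. -/
open Set Topology TopologicalSpace

universe u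

theorem aux_chart {M : Type u} [TopologicalSpace M] (hM : IsNManifold M 1) (y : M) :
    ∃ g : ℝ → M, IsOpenEmbedding g ∧ y ∈ range g := by
  obtain ⟨V, hy, hV, ⟨e⟩⟩ := hM.2 y
  let e' : V ≃ₜ ℝ := e.trans ((EuclideanSpace.equiv (Fin 1) ℝ).toHomeomorph.trans
    (Homeomorph.funUnique (Fin 1) ℝ))
  refine ⟨fun t => (e'.symm t : M), hV.isOpenEmbedding_subtypeVal.comp e'.symm.isOpenEmbedding,
    e' ⟨y, hy⟩, by simp⟩

theorem aux_mem {M : Type u} [TopologicalSpace M] {x y : M} : y ∈ NHpt x ↔ Bump y x := by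
  simp [NHpt, NH]

theorem aux_disj {M : Type u} [TopologicalSpace M] {x : M} {g : ℝ → M}
    (hg : IsOpenEmbedding g) (hx : x ∈ range g) {z : M} (hz : z ∈ range g) : z ∉ NHpt x := by
  rw [aux_mem]
  rintro ⟨hne, hb⟩
  obtain ⟨a, rfl⟩ := hx
  obtain ⟨b, rfl⟩ := hz
  have hab : b ≠ a := fun h => hne (by rw [h])
  obtain ⟨U, V, hU, hV, hbU, haV, hd⟩ := t2_separation hab
  obtain ⟨w, ⟨p, hp, rfl⟩, ⟨q, hq, hpq⟩⟩ := hb (g '' U) (g '' V) (hg.isOpenMap _ hU)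
    (hg.isOpenMap _ hV) (mem_image_of_mem _ hbU) (mem_image_of_mem _ haV)
  have := hg.injective hpq
  subst this
  exact Set.disjoint_left.1 hd hp hq

theorem aux_closed_s8 {M : Type u} [TopologicalSpace M] (hM : IsNManifold M 1) (x : M) :
    IsClosed (NHpt x) := by
  rw [← isOpen_compl_iff, isOpen_iff_forall_mem_open]
  intro z hz
  by_cases hzx : z = x
  · subst hzx
    obtain ⟨g, hg, hx⟩ := aux_chart hM z
    exact ⟨range g, fun w hw => aux_disj hg hx hw, hg.isOpen_range, hx⟩
  · have : ¬ Bump z x := fun h => hz (aux_mem.2 h)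
    simp only [Bump, not_and, not_forall] at this
    obtain ⟨U, V, hU, hV, hzU, hxV, hd⟩ := this hzx
    exact ⟨U, fun w hw hwN => hd ((aux_mem.1 hwN).2 U V hU hV hw hxV), hU, hzU⟩

theorem aux_homeo {M : Type u} [TopologicalSpace M] {x : M} (h : M ≃ₜ M) (hx : h x = x)
    {y : M} (hy : y ∈ NHpt x) : h y ∈ NHpt x := by
  rw [aux_mem] at *
  refine ⟨fun e => hy.1 (h.injective (e.trans hx.symm)), fun U V hU hV hyU hxV => ?_⟩
  obtain ⟨w, hw⟩ := hy.2 (h ⁻¹' U) (h ⁻¹' V) (hU.preimage h.continuous) (hV.preimage h.continuous)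
    hyU (by simpa [hx] using hxV)
  exact ⟨h w, hw⟩

theorem aux_homeo_iff {M : Type u} [TopologicalSpace M] {x : M} (h : M ≃ₜ M) (hx : h x = x)
    (y : M) : h y ∈ NHpt x ↔ y ∈ NHpt x := by
  refine ⟨fun hy => ?_, aux_homeo h hx⟩
  have := aux_homeo h.symm (by rw [h.symm_apply_eq, hx]) hy
  simpa using this

theorem aux_path {M : Type u} [TopologicalSpace M] {N : Set M} {g : ℝ → M}
    (hg : IsOpenEmbedding g) {c : ℝ} (hc : g c ∈ N) {γ : ℝ → M} (hγ : Continuous γ)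
    (h0 : γ 0 = g c) (h1 : ∀ t ∈ Ioc (0 : ℝ) 1, γ t ∉ N) :
    ∃ d, d ≠ c ∧ ∀ t ∈ uIcc c d, g t ∈ N → t = c := by
  have hs : γ ⁻¹' range g ∈ 𝓝 (0 : ℝ) :=
    (hg.isOpen_range.preimage hγ).mem_nhds (by simp [h0])
  obtain ⟨ε, hε, hb⟩ := Metric.mem_nhds_iff.1 hs
  set δ := min (ε / 2) 1 with hδ
  have hδ0 : 0 < δ := by positivity
  have hδ1 : δ ≤ 1 := min_le_right _ _
  have hδε : δ < ε := (min_le_left _ _).trans_lt (by linarith)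
  have hsub : γ '' Icc 0 δ ⊆ range g := by
    rintro _ ⟨t, ht, rfl⟩
    apply hb
    rw [Metric.mem_ball, Real.dist_eq, sub_zero, abs_of_nonneg ht.1]
    linarith [ht.2]
  have hJ : IsPreconnected (g ⁻¹' (γ '' Icc 0 δ)) := by
    rw [← hg.isInducing.isPreconnected_image, image_preimage_eq_of_subset hsub]
    exact isPreconnected_Icc.image _ hγ.continuousOn
  obtain ⟨d, hd⟩ := hsub (mem_image_of_mem γ (right_mem_Icc.2 hδ0.le))
  refine ⟨d, ?_, ?_⟩
  · rintro rfl
    exact h1 δ ⟨hδ0, hδ1⟩ (hd ▸ hc)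
  · intro t ht htN
    obtain ⟨r, hr, hrt⟩ : t ∈ g ⁻¹' (γ '' Icc 0 δ) :=
      hJ.ordConnected.uIcc_subset ⟨0, left_mem_Icc.2 hδ0.le, h0⟩
        ⟨δ, right_mem_Icc.2 hδ0.le, hd.symm⟩ ht
    rcases hr.1.eq_or_lt with h | h
    · subst h
      exact hg.injective (hrt.symm.trans h0)
    · exact absurd (hrt ▸ htN) (h1 r ⟨h, hr.2.trans hδ1⟩)

theorem aux_countable {C : Set ℝ} (h : ∀ c ∈ C, ∃ d, d ≠ c ∧ ∀ t ∈ uIcc c d, t ∈ C → t = c) :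
    C.Countable := by
  refine (countable_setOfPred_isolated_right_within (s := C) |>.union
    (countable_setOfPred_isolated_left_within (s := C))).mono fun c hc => ?_
  obtain ⟨d, hne, hd⟩ := h c hc
  rcases lt_or_gt_of_ne hne with hlt | hlt
  · right
    refine ⟨hc, Filter.empty_mem_iff_bot.1 ?_⟩
    filter_upwards [self_mem_nhdsWithin, mem_nhdsWithin_of_mem_nhds (Ioi_mem_nhds hlt)] with t h1 h2
    have h3 : t < c := h1.2
    have h2 : d < t := h2
    exact h3.ne (hd t (by rw [uIcc_of_ge hlt.le]; exact ⟨h2.le, h3.le⟩) h1.1)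
  · left
    refine ⟨hc, Filter.empty_mem_iff_bot.1 ?_⟩
    filter_upwards [self_mem_nhdsWithin, mem_nhdsWithin_of_mem_nhds (Iio_mem_nhds hlt)] with t h1 h2
    have h3 : c < t := h1.2
    have h2 : t < d := h2
    exact h3.ne' (hd t (by rw [uIcc_of_le hlt.le]; exact ⟨h3.le, h2.le⟩) h1.1)

theorem aux_perfect {C : Set ℝ} (hC : Perfect C) (hne : C.Nonempty) : ¬ C.Countable := by
  intro hc
  obtain ⟨f, hf, -, hinj⟩ := hC.exists_nat_bool_injection hne
  have : (univ : Set (ℕ → Bool)).Countable := by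
    refine Set.countable_of_injective_of_countable_image hinj.injOn ?_
    rw [image_univ]
    exact hc.mono hf
  have h2 : Countable (ℕ → Bool) := countable_univ_iff.1 this
  have h3 : Countable (Set ℕ) := by
    classical
    refine Function.Injective.countable (f := fun (s : Set ℕ) (n : ℕ) => decide (n ∈ s)) ?_
    intro s t hst
    ext n
    simpa using congrFun hst n
  obtain ⟨f, hf⟩ := h3.exists_injective_nat
  exact Function.cantor_injective f hf

/-- In a 1-manifold, if any two points of `NH(x)` can be exchanged by
a homeomorphism fixing `x`, then `NH(x)` is discrete. -/
theorem stmt8 {M : Type u} [TopologicalSpace M] (hM : IsNManifold M 1)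
    (x : M)
    (hhom : ∀ y₀ ∈ NHpt x, ∀ y₁ ∈ NHpt x,
      ∃ h : M ≃ₜ M, h x = x ∧ h y₀ = y₁) :
    DiscreteTopology (NHpt x) := by
  by_contra hnd
  rw [discreteTopology_subtype_iff] at hnd
  push Not at hnd
  obtain ⟨y, hy, hacc⟩ := hnd
  have hyacc : AccPt y (Filter.principal (NHpt x)) := hacc
  have hall : ∀ z ∈ NHpt x, AccPt z (Filter.principal (NHpt x)) := by
    intro z hz
    obtain ⟨h, hx, rfl⟩ := hhom y hy z hz
    rw [accPt_iff_frequently] at hyacc ⊢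
    rw [← h.map_nhds_eq, Filter.frequently_map]
    exact hyacc.mono fun w hw => ⟨h.injective.ne hw.1, aux_homeo h hx hw.2⟩
  obtain ⟨g, hg, b, hgb⟩ := aux_chart hM y
  obtain ⟨g', hg', hx'⟩ := aux_chart hM x
  have hcl : IsClosed (g ⁻¹' NHpt x) := (aux_closed_s8 hM x).preimage hg.continuous
  have hCne : (g ⁻¹' NHpt x).Nonempty := ⟨b, by simpa [hgb] using hy⟩
  obtain ⟨_, ⟨p, rfl⟩, hp'⟩ := (aux_mem.1 hy).2 _ _ hg.isOpen_range hg'.isOpen_range ⟨b, hgb⟩ hx'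
  have hpN : g p ∉ NHpt x := aux_disj hg' hx' hp'
  obtain ⟨a, haC, ha⟩ := hcl.exists_infDist_eq_dist hCne p
  have hpa : p ≠ a := by
    rintro rfl
    exact hpN haC
  have key : ∀ c ∈ g ⁻¹' NHpt x, ∃ d, d ≠ c ∧ ∀ t ∈ uIcc c d, g t ∈ NHpt x → t = c := by
    intro c hc
    obtain ⟨h, hx, hac⟩ := hhom (g a) haC (g c) hc
    refine aux_path hg hc (γ := fun t => h (g (a + t * (p - a)))) ?_ (by simpa using hac) ?_
    · exact h.continuous.comp (hg.continuous.comp (by fun_prop))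
    · intro t ht hmem
      rw [aux_homeo_iff h hx] at hmem
      have h1 := Metric.infDist_le_dist_of_mem (x := p) (s := g ⁻¹' NHpt x) hmem
      rw [ha, Real.dist_eq, Real.dist_eq,
        show p - (a + t * (p - a)) = (1 - t) * (p - a) by ring, abs_mul,
        abs_of_nonneg (show (0:ℝ) ≤ 1 - t by linarith [ht.2])] at h1
      have h2 : 0 < |p - a| := abs_pos.2 (sub_ne_zero.2 hpa)
      nlinarith [ht.1]
  refine aux_perfect ⟨hcl, fun c hc => ?_⟩ hCne (aux_countable key)
  have := hall (g c) hc
  rw [accPt_iff_frequently] at this ⊢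
  rw [← hg.map_nhds_eq, Filter.frequently_map] at this
  exact this.mono fun w hw => ⟨fun e => hw.1 (by rw [e]), hw.2⟩
end

section
/- Let A ⊆ ℝ be a closed set such that for all x, y ∈ A there exist real numbers a < x < b and a map h : (a,b) → ℝ which is a homeomorphism onto its image, satisfies h(A ∩ (a,b)) ⊆ A, and h(x) = y. Then either A = ℝ or A is a discrete subset of ℝ. -/
open Set Topology TopologicalSpace

universe u

/-- one-sided isolation -/
theorem aux_transfer (A : Set ℝ) (x y a b : ℝ) (hx : x ∈ Set.Ioo a b)
    (h : Set.Ioo a b → ℝ) (he : IsEmbedding h)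
    (hm : ∀ t : Set.Ioo a b, (t : ℝ) ∈ A → h t ∈ A) (hy : h ⟨x, hx⟩ = y)
    (H : ∃ e > 0, (∀ t ∈ A, ¬ (y < t ∧ t < y + e)) ∨ (∀ t ∈ A, ¬ (y - e < t ∧ t < y))) :
    ∃ e > 0, (∀ t ∈ A, ¬ (x < t ∧ t < x + e)) ∨ (∀ t ∈ A, ¬ (x - e < t ∧ t < x)) := by
  obtain ⟨e, epos, H⟩ := H
  have hc := Metric.continuous_iff.1 he.continuous ⟨x, hx⟩ e epos
  obtain ⟨d, dpos, hd⟩ := hc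
  have hmon : StrictMono h ∨ StrictAnti h := by
    haveI : Inhabited (Set.Ioo a b) := ⟨⟨x, hx⟩⟩
    exact he.continuous.strictMono_of_inj he.injective
  have hd' : ∀ t (ht : t ∈ Set.Ioo a b), x - d < t → t < x + d →
      y - e < h ⟨t, ht⟩ ∧ h ⟨t, ht⟩ < y + e := by
    intro t ht h1 h2
    have := hd ⟨t, ht⟩ (by rw [Subtype.dist_eq, Real.dist_eq, abs_lt]; constructor <;> simp <;> linarith)
    rw [hy, Real.dist_eq, abs_lt] at this
    constructor <;> linarith
  have h1 := hx.1
  have h2 := hx.2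
  have key : ∃ e' > 0, e' ≤ d ∧ e' ≤ x - a ∧ e' ≤ b - x :=
    ⟨min d (min (x - a) (b - x)), by simp [dpos, h1, h2], by simp, by simp, by simp⟩
  obtain ⟨e', e'pos, k1, k2, k3⟩ := key
  refine ⟨e', e'pos, ?_⟩
  have R : ∀ t ∈ A, x - e' < t → t < x + e' → ∃ ht : t ∈ Set.Ioo a b,
      h ⟨t, ht⟩ ∈ A ∧ y - e < h ⟨t, ht⟩ ∧ h ⟨t, ht⟩ < y + e := by
    intro t htA l1 l2
    have ht : t ∈ Set.Ioo a b := ⟨by linarith, by linarith⟩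
    exact ⟨ht, hm ⟨t, ht⟩ htA, hd' t ht (by linarith) (by linarith)⟩
  rcases hmon with hmon | hmon <;> rcases H with H | H
  · left
    rintro t htA ⟨l1, l2⟩
    obtain ⟨ht, r1, r2, r3⟩ := R t htA (by linarith) l2
    have := @hmon ⟨x, hx⟩ ⟨t, ht⟩ l1
    exact H _ r1 ⟨hy ▸ this, r3⟩
  · right
    rintro t htA ⟨l1, l2⟩
    obtain ⟨ht, r1, r2, r3⟩ := R t htA l1 (by linarith)
    have := @hmon ⟨t, ht⟩ ⟨x, hx⟩ l2
    exact H _ r1 ⟨r2, hy ▸ this⟩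
  · right
    rintro t htA ⟨l1, l2⟩
    obtain ⟨ht, r1, r2, r3⟩ := R t htA l1 (by linarith)
    have := @hmon ⟨t, ht⟩ ⟨x, hx⟩ l2
    exact H _ r1 ⟨hy ▸ this, r3⟩
  · left
    rintro t htA ⟨l1, l2⟩
    obtain ⟨ht, r1, r2, r3⟩ := R t htA (by linarith) l2
    have := @hmon ⟨x, hx⟩ ⟨t, ht⟩ l1
    exact H _ r1 ⟨r2, hy ▸ this⟩

theorem aux_exists (A : Set ℝ) (hA : IsClosed A) (hne : A.Nonempty) (hU : A ≠ Set.univ) :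
    ∃ y ∈ A, ∃ e > 0, (∀ t ∈ A, ¬ (y < t ∧ t < y + e)) ∨ (∀ t ∈ A, ¬ (y - e < t ∧ t < y)) := by
  obtain ⟨p, hp⟩ := hne
  obtain ⟨z, hz⟩ := (Set.ne_univ_iff_exists_notMem A).1 hU
  have hpz : p ≠ z := fun h => hz (h ▸ hp)
  rcases lt_or_gt_of_ne hpz with hlt | hlt
  · obtain ⟨y, ⟨hyA, hyI⟩, hy⟩ := (isCompact_Icc.inter_left hA :
      IsCompact (A ∩ Set.Icc p z)).exists_isGreatest ⟨p, hp, le_rfl, hlt.le⟩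
    have hyz : y < z := lt_of_le_of_ne hyI.2 (fun h => hz (h ▸ hyA))
    refine ⟨y, hyA, z - y, by linarith, Or.inl ?_⟩
    rintro t ht ⟨l1, l2⟩
    have := hy ⟨ht, by linarith [hyI.1], by linarith⟩
    linarith
  · obtain ⟨y, ⟨hyA, hyI⟩, hy⟩ := (isCompact_Icc.inter_left hA :
      IsCompact (A ∩ Set.Icc z p)).exists_isLeast ⟨p, hp, hlt.le, le_rfl⟩
    have hyz : z < y := lt_of_le_of_ne hyI.1 (fun h => hz (h ▸ hyA))
    refine ⟨y, hyA, y - z, by linarith, Or.inr ?_⟩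
    rintro t ht ⟨l1, l2⟩
    have := hy ⟨ht, by linarith, by linarith [hyI.2]⟩
    linarith

theorem aux_countable_s9 (A : Set ℝ)
    (H : ∀ x ∈ A, ∃ e > 0, (∀ t ∈ A, ¬ (x < t ∧ t < x + e)) ∨
      (∀ t ∈ A, ¬ (x - e < t ∧ t < x))) : A.Countable := by
  refine ((countable_setOfPred_isolated_right_within (s := A)).union
    (countable_setOfPred_isolated_left_within (s := A))).mono ?_
  intro x hx
  obtain ⟨e, epos, h | h⟩ := H x hx
  · left
    refine ⟨hx, Filter.empty_mem_iff_bot.1 ?_⟩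
    rw [mem_nhdsWithin]
    exact ⟨Set.Iio (x + e), isOpen_Iio, by simpa using epos,
      fun t ht => h t ht.2.1 ⟨ht.2.2, ht.1⟩⟩
  · right
    refine ⟨hx, Filter.empty_mem_iff_bot.1 ?_⟩
    rw [mem_nhdsWithin]
    exact ⟨Set.Ioi (x - e), isOpen_Ioi, by simpa using epos,
      fun t ht => h t ht.2.1 ⟨ht.1, ht.2.2⟩⟩

/-- A closed `A ⊆ ℝ` such that any point of `A` can be mapped to any
other by a local homeomorphism (onto its image) preserving `A` is either all of
`ℝ` or discrete. -/
theorem stmt9 (A : Set ℝ) (hA : IsClosed A)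
    (hhom : ∀ x ∈ A, ∀ y ∈ A, ∃ (a b : ℝ) (hx : x ∈ Set.Ioo a b)
      (h : Set.Ioo a b → ℝ), IsEmbedding h ∧
        (∀ t : Set.Ioo a b, (t : ℝ) ∈ A → h t ∈ A) ∧ h ⟨x, hx⟩ = y) :
    A = Set.univ ∨ DiscreteTopology A := by
  by_cases hU : A = Set.univ
  · exact Or.inl hU
  right
  rw [discreteTopology_subtype_iff]
  intro x hxA
  obtain ⟨y0, hy0, hy0'⟩ := aux_exists A hA ⟨x, hxA⟩ hU
  have hcount : A.Countable := by
    apply aux_countable_s9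
    intro x hx
    obtain ⟨a, b, hxI, h, he, hm, hy⟩ := hhom x hx y0 hy0
    exact aux_transfer A x y0 a b hxI h he hm hy hy0'
  have hnp : ¬ Preperfect A := by
    intro hp
    have hcard : Cardinal.mk (ℕ → Bool) = Cardinal.continuum := by simp
    obtain ⟨f, hf, -, hinj⟩ := Perfect.exists_nat_bool_injection ⟨hA, hp⟩ ⟨x, hxA⟩
    have h1 : (Set.range f).Countable := hcount.mono hf
    have h2 : (Set.univ : Set (ℕ → Bool)).Countable :=
      Set.countable_of_injective_of_countable_image hinj.injOn (by rwa [Set.image_univ])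
    have h3 := Set.countable_univ_iff.1 h2
    have h4 := Cardinal.mk_le_aleph0_iff.2 h3
    rw [hcard] at h4
    exact absurd h4 (not_le.2 Cardinal.aleph0_lt_continuum)
  simp only [Preperfect, not_forall] at hnp
  obtain ⟨y, hyA, hyacc⟩ := hnp
  obtain ⟨a, b, hxI, h, he, hm, hy⟩ := hhom x hxA y hyA
  suffices hs : ¬ AccPt x (Filter.principal A) by
    simpa [AccPt, Filter.not_neBot] using hs
  rw [accPt_iff_nhds] at hyacc ⊢
  push Not at hyacc ⊢
  obtain ⟨U, hUn, hU'⟩ := hyacc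
  have hpre : h ⁻¹' U ∈ 𝓝 (⟨x, hxI⟩ : Set.Ioo a b) :=
    he.continuous.continuousAt (by rwa [hy])
  refine ⟨Subtype.val '' (h ⁻¹' U),
    (isOpen_Ioo.isOpenEmbedding_subtypeVal).image_mem_nhds.2 hpre, ?_⟩
  rintro _ ⟨⟨t, htU, rfl⟩, htA⟩
  have h1 := hU' (h t) ⟨htU, hm t htA⟩
  rw [← hy] at h1
  rw [he.injective h1]
end

section
/- Let M be a 1-manifold which has a basis of open sets each of which is Hausdorff and f-rim-simple. Then NH(p) is a discrete subset of M for every p ∈ M. -/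
open Set Topology TopologicalSpace

universe u

theorem finite_rim_real (S : Set ℝ) (hS : IsPreconnected S) : (closure S \ S).Finite := by
  have h1 : {x | IsLUB S x}.Finite :=
    Set.Subsingleton.finite (fun a ha b hb => IsLUB.unique ha hb)
  have h2 : {x | IsGLB S x}.Finite :=
    Set.Subsingleton.finite (fun a ha b hb => IsGLB.unique ha hb)
  refine (h1.union h2).subset ?_
  rintro y ⟨hy, hyS⟩
  have ho := hS.ordConnected
  by_cases hu : ∀ x ∈ S, x ≤ y
  · exact Or.inl (isLUB_of_mem_closure hu hy)
  · push Not at hu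
    obtain ⟨b, hb, hyb⟩ := hu
    refine Or.inr (isGLB_of_mem_closure ?_ hy)
    intro a ha
    by_contra hlt
    push Not at hlt
    exact hyS (ho.out ha hb ⟨hlt.le, hyb.le⟩)

theorem finite_rim {M : Type u} [TopologicalSpace M] (E : Set M) (h : E ≃ₜ ℝ)
    (C : Set M) (hCE : C ⊆ E) (hC : IsPreconnected C) : (E ∩ (closure C \ C)).Finite := by
  set D : Set E := Subtype.val ⁻¹' C with hD
  have hDC : Subtype.val '' D = C := by
    rw [hD, Subtype.image_preimage_coe]; exact Set.inter_eq_right.2 hCE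
  have hDp : IsPreconnected D := by
    rw [← IsInducing.subtypeVal.isPreconnected_image, hDC]; exact hC
  have hf := finite_rim_real (h '' D) (hDp.image _ h.continuous.continuousOn)
  have hf2 : (closure D \ D).Finite := by
    rw [← h.image_closure, ← Set.image_sdiff h.injective] at hf
    exact hf.of_finite_image h.injective.injOn
  refine (hf2.image Subtype.val).subset ?_
  rintro y ⟨hyE, hyc, hyC⟩
  refine ⟨⟨y, hyE⟩, ⟨?_, hyC⟩, rfl⟩
  rw [IsInducing.subtypeVal.closure_eq_preimage_closure_image, hDC]
  exact hyc

theorem not_bump {M : Type u} [TopologicalSpace M] (U : Set M) (hU : IsOpen U) (hT : T2Space U)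
    (x y : M) (hx : x ∈ U) (hy : y ∈ U) : ¬ Bump x y := by
  rintro ⟨hne, hb⟩
  obtain ⟨u, v, hu, hv, hxu, hyv, hd⟩ := t2_separation
    (show (⟨x, hx⟩ : U) ≠ ⟨y, hy⟩ from fun h => hne (congrArg Subtype.val h))
  obtain ⟨z, ⟨a, ha, rfl⟩, ⟨b, hb', hab⟩⟩ := hb (Subtype.val '' u) (Subtype.val '' v)
    (hU.isOpenMap_subtype_val _ hu) (hU.isOpenMap_subtype_val _ hv)
    ⟨_, hxu, rfl⟩ ⟨_, hyv, rfl⟩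
  have : b = a := Subtype.ext hab
  subst this
  exact Set.disjoint_left.1 hd ha hb'

/-- If a 1-manifold has a basis of open Hausdorff f-rim-simple sets,
then `NH(p)` is discrete for every `p`. -/
theorem stmt10 {M : Type u} [TopologicalSpace M] (hM : IsNManifold M 1)
    (B : Set (Set M)) (hB : TopologicalSpace.IsTopologicalBasis B)
    (hB2 : ∀ U ∈ B, T2Space U ∧ FRimSimple U)
    (p : M) : DiscreteTopology (NHpt p) := by
  rw [discreteTopology_subtype_iff']
  intro q hq
  have hbp : ∀ y ∈ NHpt p, Bump y p := by
    rintro y ⟨x, hx, hyx⟩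
    rw [Set.mem_singleton_iff] at hx
    exact hx ▸ hyx
  obtain ⟨E, hqE, hEo, ⟨e⟩⟩ := hM.2 q
  let h : E ≃ₜ ℝ := (e.trans (EuclideanSpace.equiv (Fin 1) ℝ).toHomeomorph).trans
    (Homeomorph.funUnique (Fin 1) ℝ)
  obtain ⟨U, hUB, hqU, hUE⟩ := hB.exists_subset_of_mem_open hqE hEo
  obtain ⟨V, hVB, hpV, -⟩ := hB.exists_subset_of_mem_open (Set.mem_univ p) isOpen_univ
  have hUo := hB.isOpen hUB
  have hVo := hB.isOpen hVB
  obtain ⟨hUT, hUr⟩ := hB2 U hUB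
  obtain ⟨hVT, -⟩ := hB2 V hVB
  have hpU : p ∉ U := fun hp => not_bump U hUo hUT q p hqU hp (hbp q hq)
  have hpc : p ∈ closure U := by
    rw [mem_closure_iff]
    intro o ho hpo
    have := (hbp q hq).2 U o hUo ho hqU hpo
    rwa [Set.inter_comm]
  obtain ⟨W, hWo, hpW, hWV, hfin⟩ := hUr p ⟨hpc, hpU⟩ V hVo hpV
  have hfinN : (NHpt p ∩ U).Finite := by
    refine (hfin.biUnion (t := fun C => E ∩ (closure C \ C)) ?_).subset ?_
    · rintro C ⟨z, hz, rfl⟩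
      exact finite_rim E h _ ((connectedComponentIn_subset _ _).trans
        (Set.inter_subset_right.trans hUE)) isPreconnected_connectedComponentIn
    · rintro y ⟨hy, hyU⟩
      have hyW : y ∉ W := fun hw => not_bump V hVo hVT y p (hWV hw) hpV (hbp y hy)
      have hyc : y ∈ closure (W ∩ U) := by
        rw [mem_closure_iff]
        intro o ho hyo
        obtain ⟨t, ht, htW⟩ := (hbp y hy).2 (o ∩ U) W (ho.inter hUo) hWo ⟨hyo, hyU⟩ hpW
        exact ⟨t, ht.1, htW, ht.2⟩
      have hsub : W ∩ U ⊆ ⋃ C ∈ {C : Set M | ∃ z ∈ W ∩ U, C = connectedComponentIn (W ∩ U) z}, C :=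
        fun z hz => Set.mem_biUnion (x := connectedComponentIn (W ∩ U) z) ⟨z, hz, rfl⟩
          (mem_connectedComponentIn hz)
      have := closure_mono hsub hyc
      rw [hfin.closure_biUnion] at this
      obtain ⟨C, hC, hyC⟩ := Set.mem_iUnion₂.1 this
      refine Set.mem_biUnion hC ⟨hUE hyU, hyC, fun hh => hyW ?_⟩
      obtain ⟨z, hz, rfl⟩ := hC
      exact (connectedComponentIn_subset _ _ hh).1
  set F : Set U := Subtype.val ⁻¹' ((NHpt p ∩ U) \ {q}) with hF
  have hFf : F.Finite := (hfinN.subset Set.diff_subset).preimage Subtype.val_injective.injOn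
  refine ⟨Subtype.val '' Fᶜ, hUo.isOpenMap_subtype_val _ hFf.isClosed.isOpen_compl, ?_⟩
  ext y
  constructor
  · rintro ⟨⟨a, ha, rfl⟩, hy⟩
    by_contra hne
    exact ha ⟨⟨hy, a.2⟩, hne⟩
  · rintro rfl
    exact ⟨⟨⟨y, hqU⟩, fun hh => hh.2 rfl, rfl⟩, hq⟩
end

section
/- Let M be an n-manifold and U ⊆ M an Euclidean subset. If U is the union of a family of fewer than cov(ℳ) closed subsets of M, then there is an open set V ⊆ U which is dense in U and satisfies NH(V) = ∅; in particular, M is not everywhere non-Hausdorff. -/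
open Set Topology TopologicalSpace

universe u

/-- `c`-Baire: fewer than `c` dense open sets have dense intersection. -/
def CBaire (c : Cardinal.{0}) (Y : Type*) [TopologicalSpace Y] : Prop :=
  ∀ (ι : Type) (G : ι → Set Y), Cardinal.mk ι < c → (∀ i, IsOpen (G i)) →
    (∀ i, Dense (G i)) → Dense (⋂ i, G i)

theorem CBaire.homeo {c : Cardinal.{0}} {X Y : Type*} [TopologicalSpace X] [TopologicalSpace Y]
    (h : CBaire c X) (e : X ≃ₜ Y) : CBaire c Y := by
  intro ι G hc hG hD
  have := h ι (fun i => e ⁻¹' G i) hc (fun i => (hG i).preimage e.continuous)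
    (fun i => (hD i).preimage e.isOpenMap)
  have h2 := e.surjective.denseRange.dense_image e.continuous this
  refine h2.mono ?_
  rintro _ ⟨x, hx, rfl⟩
  simpa using hx

theorem mk_prod_lt {c : Cardinal.{0}} (hc : Cardinal.aleph0 < c) {ι κ : Type} [Countable κ]
    (h : Cardinal.mk ι < c) : Cardinal.mk (ι × κ) < c := by
  rw [Cardinal.mk_prod, Cardinal.lift_id, Cardinal.lift_id]
  exact Cardinal.mul_lt_of_lt hc.le h (lt_of_le_of_lt (Cardinal.mk_le_aleph0) hc)

theorem CBaire.prod {c : Cardinal.{0}} (hc : Cardinal.aleph0 < c) {X Y : Type}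
    [TopologicalSpace X] [TopologicalSpace Y] [SecondCountableTopology Y]
    (hX : CBaire c X) (hY : CBaire c Y) : CBaire c (X × Y) := by
  intro ι G hι hG hD
  have hcount : Countable (countableBasis Y) := (countable_countableBasis Y).to_subtype
  rw [dense_iff_inter_open]
  rintro W hW ⟨⟨a, b⟩, hab⟩
  obtain ⟨A, B, hA, hB, haA, hbB, hABW⟩ := isOpen_prod_iff.1 hW a b hab
  have key := hX (ι × countableBasis Y)
    (fun p => Prod.fst '' (G p.1 ∩ (Set.univ ×ˢ (p.2 : Set Y)))) (mk_prod_lt hc hι)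
    (fun p => isOpenMap_fst _ ((hG p.1).inter
      (isOpen_univ.prod (isOpen_of_mem_countableBasis p.2.2))))
    (by
      rintro ⟨i, B', hB'⟩
      rw [dense_iff_inter_open]
      rintro O hO ⟨o, ho⟩
      obtain ⟨y, hy⟩ := nonempty_of_mem_countableBasis hB'
      obtain ⟨⟨x', y'⟩, hz, hzG⟩ := (hD i).inter_open_nonempty (O ×ˢ B')
        (hO.prod (isOpen_of_mem_countableBasis hB')) ⟨(o, y), ho, hy⟩
      exact ⟨x', hz.1, (x', y'), ⟨hzG, trivial, hz.2⟩, rfl⟩)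
  obtain ⟨x, hxA, hx⟩ := key.inter_open_nonempty A hA ⟨a, haA⟩
  rw [mem_iInter] at hx
  have key2 := hY ι (fun i => (fun y => (x, y)) ⁻¹' G i) hι
    (fun i => (hG i).preimage (by fun_prop))
    (by
      intro i
      rw [dense_iff_inter_open]
      rintro O hO ⟨o, ho⟩
      obtain ⟨B', hB', hoB, hBO⟩ := (isBasis_countableBasis Y).exists_subset_of_mem_open ho hO
      obtain ⟨⟨x', y'⟩, ⟨hzG, -, hzB⟩, rfl⟩ := hx (i, ⟨B', hB'⟩)
      exact ⟨y', hBO hzB, hzG⟩)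
  obtain ⟨y, hyB, hy⟩ := key2.inter_open_nonempty B hB ⟨b, hbB⟩
  refine ⟨(x, y), hABW ⟨hxA, hyB⟩, ?_⟩
  simpa using hy

theorem aleph0_lt_cov : Cardinal.aleph0 < covMeager := by
  have hne : {c : Cardinal | ∃ (ι : Type) (F : ι → Set ℝ),
    Cardinal.mk ι = c ∧ (∀ i, IsNowhereDense (F i)) ∧ ⋃ i, F i = Set.univ}.Nonempty := by
    refine ⟨_, ℝ, fun x => {x}, rfl, fun x => ?_, by ext; simp⟩
    simp [IsNowhereDense]
  obtain ⟨ι, F, h1, h2, h3⟩ := csInf_mem hne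
  by_contra hlt
  rw [not_lt] at hlt
  have hι : Countable ι := Cardinal.mk_le_aleph0_iff.1 (h1.le.trans hlt)
  obtain ⟨i, hi⟩ := nonempty_interior_of_iUnion_of_closed (f := fun i => closure (F i))
    (fun i => isClosed_closure)
    (by rw [eq_univ_iff_forall] at h3 ⊢
        intro x
        obtain ⟨i, hi⟩ := mem_iUnion.1 (h3 x)
        exact mem_iUnion.2 ⟨i, subset_closure hi⟩)
  rw [h2 i] at hi
  exact Set.not_nonempty_empty hi

theorem cbaire_real : CBaire covMeager ℝ := by
  intro ι G hι hG hD
  rw [dense_iff_inter_open]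
  rintro W hW ⟨w, hw⟩
  by_contra hemp
  have hlt := mk_prod_lt aleph0_lt_cov (κ := ℚ) hι
  refine not_le_of_gt hlt (csInf_le' ⟨ι × ℚ,
    fun p => (Homeomorph.addRight (p.2 : ℝ)) '' (G p.1)ᶜ, rfl, ?_, ?_⟩)
  · rintro ⟨i, q⟩
    have : interior (G i)ᶜ = ∅ := by
      rw [interior_compl, (hD i).closure_eq, compl_univ]
    simp only [IsNowhereDense]
    rw [← Homeomorph.image_closure, ← Homeomorph.image_interior,
      (hG i).isClosed_compl.closure_eq, this, image_empty]
  · rw [eq_univ_iff_forall]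
    intro x
    have hO : IsOpen ((fun t : ℝ => x - t) ⁻¹' W) := hW.preimage (by fun_prop)
    obtain ⟨t, ht, q, rfl⟩ := Rat.denseRange_cast (𝕜 := ℝ) |>.inter_open_nonempty _ hO
      ⟨x - w, by simpa using hw⟩
    have : x - q ∉ ⋂ i, G i := fun h => hemp ⟨_, ht, h⟩
    rw [mem_iInter, not_forall] at this
    obtain ⟨i, hi⟩ := this
    exact mem_iUnion.2 ⟨(i, q), x - q, hi, by simp⟩

theorem cbaire_pi (n : ℕ) : CBaire covMeager (Fin n → ℝ) := by
  induction n with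
  | zero =>
    intro ι G _ _ hD
    have : (⋂ i, G i) = univ := by
      rw [eq_univ_iff_forall]
      intro x
      rw [mem_iInter]
      intro i
      obtain ⟨y, hy⟩ := (hD i).nonempty
      rwa [Subsingleton.elim x y]
    rw [this]; exact dense_univ
  | succ n ih =>
    exact (CBaire.prod aleph0_lt_cov cbaire_real ih).homeo (Fin.consEquivL ℝ (fun _ : Fin (n+1) => ℝ)).toHomeomorph

/-- If an Euclidean subset `U` of a manifold is a union of fewer than
`cov(ℳ)` closed subsets of `M`, then some open `V ⊆ U` dense in `U` has
`NH(V) = ∅`; in particular `M` is not everywhere non-Hausdorff. -/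
theorem stmt11 {M : Type u} [TopologicalSpace M] (n : ℕ) (hM : IsNManifold M n)
    (U : Set M) (hU : IsEuclidean n U)
    (ι : Type) (F : ι → Set M) (hcard : Cardinal.mk ι < covMeager)
    (hF : ∀ i, IsClosed (F i)) (hUnion : U = ⋃ i, F i) :
    (∃ V : Set M, IsOpen V ∧ V ⊆ U ∧ U ⊆ closure V ∧ NH V = ∅) ∧
    ¬ ∀ x : M, (NHpt x).Nonempty := by
  obtain ⟨hUo, ⟨e⟩⟩ := hU
  have hB : CBaire covMeager U :=
    ((cbaire_pi n).homeo (EuclideanSpace.equiv (Fin n) ℝ).symm.toHomeomorph).homeo e.symm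
  have hT2 : T2Space U := e.symm.t2Space
  have hVU : (⋃ i, interior (F i)) ⊆ U := by
    rw [hUnion]; exact iUnion_mono fun i => interior_subset
  have hdense : U ⊆ closure (⋃ i, interior (F i)) := by
    have hD := hB ι (fun i => Subtype.val ⁻¹' (frontier (F i))ᶜ) hcard
      (fun i => (isClosed_frontier.isOpen_compl).preimage continuous_subtype_val)
      (fun i => Dense.preimage
        (by rw [← interior_eq_empty_iff_dense_compl]; exact interior_frontier (hF i))
        hUo.isOpenMap_subtype_val)
    intro x hx
    rw [mem_closure_iff]
    intro O hO hxO
    obtain ⟨⟨y, hyU⟩, hyO, hy⟩ := hD.inter_open_nonempty (Subtype.val ⁻¹' O)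
      (hO.preimage continuous_subtype_val) ⟨⟨x, hx⟩, hxO⟩
    refine ⟨y, hyO, ?_⟩
    rw [mem_iInter] at hy
    have hyU' := hyU
    rw [hUnion] at hyU'
    obtain ⟨i, hi⟩ := mem_iUnion.1 hyU'
    refine mem_iUnion.2 ⟨i, ?_⟩
    by_contra hni
    exact hy i ⟨subset_closure hi, hni⟩
  have hNH : NH (⋃ i, interior (F i)) = ∅ := by
    rw [eq_empty_iff_forall_notMem]
    rintro y ⟨x, hx, hne, hb⟩
    have hxU : x ∈ U := hVU hx
    obtain ⟨i, hi⟩ := mem_iUnion.1 hx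
    have hyU : y ∈ U := by
      rw [hUnion]
      refine mem_iUnion.2 ⟨i, ?_⟩
      by_contra hy
      obtain ⟨z, hz1, hz2⟩ := hb _ _ (hF i).isOpen_compl isOpen_interior hy hi
      exact hz1 (interior_subset hz2)
    obtain ⟨A, B, hA, hB', hyA, hxB, hAB⟩ := t2_separation
      (show (⟨y, hyU⟩ : U) ≠ ⟨x, hxU⟩ from fun h => hne (congrArg Subtype.val h))
    obtain ⟨z, ⟨a, ha, rfl⟩, ⟨b, hb', hab⟩⟩ := hb _ _ (hUo.isOpenMap_subtype_val _ hA)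
      (hUo.isOpenMap_subtype_val _ hB') ⟨_, hyA, rfl⟩ ⟨_, hxB, rfl⟩
    have : b = a := Subtype.ext hab
    subst this
    exact disjoint_left.1 hAB ha hb'
  refine ⟨⟨_, isOpen_iUnion fun i => isOpen_interior, hVU, hdense, hNH⟩, ?_⟩
  intro hall
  obtain ⟨x, hx⟩ := closure_nonempty_iff.1 ⟨_, hdense (e.symm 0).2⟩
  obtain ⟨y, z, hz, hyz⟩ := hall x
  rw [mem_singleton_iff] at hz
  subst hz
  exact (hNH ▸ (⟨z, hx, hyz⟩ : y ∈ NH (⋃ i, interior (F i))) : y ∈ (∅ : Set M))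
end

section
/- Let X be a Fréchet–Urysohn, locally Hausdorff space and let K ⊆ X be quasi-countably compact. Then NH(K) is closed in X. If moreover NH(K) ∩ K = ∅, then NH(K) is nowhere dense in X. -/
open Set Topology TopologicalSpace

universe u

/-- In a Fréchet–Urysohn locally Hausdorff space, `NH(K)` is closed
for quasi-countably compact `K`; if moreover `NH(K) ∩ K = ∅` then `NH(K)` is
nowhere dense. -/
theorem stmt12 {X : Type u} [TopologicalSpace X] [FrechetUrysohnSpace X]
    (hLH : LocallyHausdorff X) (K : Set X) (hK : QuasiCountablyCompact K) :
    IsClosed (NH K) ∧ (NH K ∩ K = ∅ → IsNowhereDense (NH K)) := by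
  have hcl : IsClosed (NH K) := by
    rw [← closure_subset_iff_isClosed]
    intro y hy
    rw [mem_closure_iff_seq_limit] at hy
    obtain ⟨v, hv, hvy⟩ := hy
    choose w hwK hw using hv
    -- cluster point
    have hx : ∃ x ∈ K, ∀ n, x ∈ closure (w '' Set.Ici n) := by
      by_contra hcon
      push Not at hcon
      obtain ⟨s, hs⟩ := hK (fun n => (closure (w '' Set.Ici n))ᶜ)
        (fun n => isClosed_closure.isOpen_compl)
        (fun x hx => by
          obtain ⟨n, hn⟩ := hcon x hx
          exact Set.mem_iUnion.2 ⟨n, hn⟩)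
      have h := hs (hwK (s.sup id))
      simp only [Set.mem_iUnion] at h
      obtain ⟨n, hn, h⟩ := h
      exact h (subset_closure ⟨s.sup id, Finset.le_sup (f := id) hn, rfl⟩)
    obtain ⟨x, hxK, hx⟩ := hx
    have key : ∀ U V : Set X, IsOpen U → IsOpen V → y ∈ U → x ∈ V →
        ∃ n, v n ∈ U ∧ w n ∈ V := by
      intro U V hU hV hyU hxV
      obtain ⟨N, hN⟩ := Filter.eventually_atTop.1 (hvy.eventually (hU.mem_nhds hyU))
      obtain ⟨_, hzV, n, hn, rfl⟩ := mem_closure_iff.1 (hx N) V hV hxV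
      exact ⟨n, hN n hn, hzV⟩
    refine ⟨x, hxK, ?_, ?_⟩
    · rintro rfl
      obtain ⟨U, hU, hyU, hT⟩ := hLH y
      obtain ⟨n, h1, h2⟩ := key U U hU hU hyU hyU
      obtain ⟨hne, hb⟩ := hw n
      have hne' : (⟨v n, h1⟩ : U) ≠ ⟨w n, h2⟩ := fun h => hne (congrArg Subtype.val h)
      obtain ⟨A, B, hA, hB, hvA, hwB, hd⟩ := t2_separation hne'
      obtain ⟨z, ⟨a, ha, rfl⟩, ⟨b, hb', hab⟩⟩ := hb _ _ (hU.isOpenMap_subtype_val A hA)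
        (hU.isOpenMap_subtype_val B hB) ⟨_, hvA, rfl⟩ ⟨_, hwB, rfl⟩
      have : b = a := Subtype.ext hab
      subst this
      exact Set.disjoint_left.1 hd ha hb'
    · intro U V hU hV hyU hxV
      obtain ⟨n, h1, h2⟩ := key U V hU hV hyU hxV
      exact (hw n).2 U V hU hV h1 h2
  refine ⟨hcl, fun hdis => ?_⟩
  rw [IsNowhereDense, hcl.closure_eq, Set.eq_empty_iff_forall_notMem]
  intro y hy
  obtain ⟨x, hxK, -, hb⟩ := interior_subset hy
  have hxc : x ∈ closure (NH K) := by
    rw [mem_closure_iff]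
    intro V hV hxV
    obtain ⟨z, hz1, hz2⟩ := hb _ V isOpen_interior hV hy hxV
    exact ⟨z, hz2, interior_subset hz1⟩
  rw [hcl.closure_eq] at hxc
  have : x ∈ NH K ∩ K := ⟨hxc, hxK⟩
  rw [hdis] at this
  exact this
end

section
/- Let X be a Fréchet–Urysohn, locally Hausdorff space and let K ⊆ X be quasi-compact. Then NH(K) is closed and nowhere dense in X. -/
open Set Topology TopologicalSpace

universe u

theorem not_bump_of_t2 {X : Type u} [TopologicalSpace X] {U : Set X} (hU : IsOpen U)
    (hT : T2Space U) {x y : X} (hx : x ∈ U) (hy : y ∈ U) : ¬ Bump x y := by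
  rintro ⟨hne, h⟩
  obtain ⟨A, B, hA, hB, hxA, hyB, hd⟩ :=
    t2_separation (x := (⟨x, hx⟩ : U)) (y := ⟨y, hy⟩) (fun e => hne (congrArg Subtype.val e))
  obtain ⟨z, ⟨a, ha, haz⟩, ⟨b, hb, hbz⟩⟩ := h (Subtype.val '' A) (Subtype.val '' B)
    (hU.isOpenMap_subtype_val A hA) (hU.isOpenMap_subtype_val B hB) ⟨_, hxA, rfl⟩ ⟨_, hyB, rfl⟩
  have hab : a = b := Subtype.ext (haz.trans hbz.symm)
  subst hab
  exact Set.disjoint_left.1 hd ha hb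

theorem isClosed_NH {X : Type u} [TopologicalSpace X]
    (hLH : LocallyHausdorff X) (K : Set X) (hK : IsCompact K) : IsClosed (NH K) := by
  rw [← isOpen_compl_iff, isOpen_iff_mem_nhds]
  intro y hy
  have key : ∀ x ∈ K, ∃ U V : Set X, IsOpen U ∧ IsOpen V ∧ x ∈ U ∧ y ∈ V ∧
      ∀ a ∈ V, ∀ b ∈ U, ¬ Bump a b := by
    intro x hx
    by_cases hxy : y = x
    · subst hxy
      obtain ⟨U, hU, hyU, hT⟩ := hLH y
      exact ⟨U, U, hU, hU, hyU, hyU, fun a ha b hb => not_bump_of_t2 hU hT ha hb⟩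
    · have h1 : ¬ Bump y x := fun h => hy ⟨x, hx, h⟩
      simp only [Bump, not_and, not_forall] at h1
      obtain ⟨V, U, hV, hU, hyV, hxU, hne⟩ := h1 hxy
      exact ⟨U, V, hU, hV, hxU, hyV, fun a ha b hb h => hne (h.2 V U hV hU ha hb)⟩
  choose! U V hU hV hxU hyV hUV using key
  obtain ⟨t, htK, ht⟩ := hK.elim_nhds_subcover U (fun x hx => (hU x hx).mem_nhds (hxU x hx))
  have hmem : (⋂ x ∈ t, V x) ∈ 𝓝 y :=
    (Filter.biInter_finset_mem t).2 fun x hx => (hV x (htK x hx)).mem_nhds (hyV x (htK x hx))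
  refine Filter.mem_of_superset hmem ?_
  rintro a ha ⟨b, hbK, hab⟩
  obtain ⟨x, hx, hbx⟩ := Set.mem_iUnion₂.1 (ht hbK)
  exact hUV x (htK x hx) a (Set.mem_iInter₂.1 ha x hx) b hbx hab

theorem interior_NH {X : Type u} [TopologicalSpace X]
    (hLH : LocallyHausdorff X) (K : Set X) (hK : IsCompact K) : interior (NH K) = ∅ := by
  choose U hU hxU hT using hLH
  obtain ⟨t, -, ht⟩ := hK.elim_nhds_subcover U (fun x _ => (hU x).mem_nhds (hxU x))
  have hsub : NH K ⊆ ⋃ x ∈ t, frontier (U x) := by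
    rintro y ⟨b, hbK, hyb⟩
    obtain ⟨x, hx, hbx⟩ := Set.mem_iUnion₂.1 (ht hbK)
    refine Set.mem_iUnion₂.2 ⟨x, hx, ?_⟩
    rw [(hU x).frontier_eq]
    refine ⟨mem_closure_iff.2 fun O hO hyO => hyb.2 O (U x) hO (hU x) hyO hbx, fun hyU => ?_⟩
    exact not_bump_of_t2 (hU x) (hT x) hyU hbx hyb
  have hfin : ∀ t : Finset X, interior (⋃ x ∈ t, frontier (U x)) = ∅ := by
    classical
    intro t
    induction t using Finset.induction_on with
    | empty => simp
    | insert a s _ ih =>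
      rw [Finset.set_biUnion_insert, interior_union_isClosed_of_interior_empty isClosed_frontier ih]
      rw [← frontier_compl]
      exact interior_frontier (hU a).isClosed_compl
  exact Set.subset_empty_iff.1 ((interior_mono hsub).trans (hfin t).subset)

/-- In a Fréchet–Urysohn locally Hausdorff space, `NH(K)` is closed
and nowhere dense for quasi-compact `K`. -/
theorem stmt13 {X : Type u} [TopologicalSpace X] [FrechetUrysohnSpace X]
    (hLH : LocallyHausdorff X) (K : Set X) (hK : IsCompact K) :
    IsClosed (NH K) ∧ IsNowhereDense (NH K) := by
  have hc := isClosed_NH hLH K hK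
  refine ⟨hc, ?_⟩
  rw [IsNowhereDense, hc.closure_eq]
  exact interior_NH hLH K hK
end

section
/- Let M be an n-manifold containing a subset A that is dense in some Euclidean subset U of M and such that NH(x) ≠ ∅ for every x ∈ A. Then M is not quasi-compact. In particular, no everywhere non-Hausdorff n-manifold is quasi-compact. -/
open Set Topology TopologicalSpace

universe u

theorem aux14 {M : Type u} [TopologicalSpace M] (n : ℕ) (hM : IsNManifold M n)
    (U A : Set M) (hU : IsEuclidean n U) (hdense : U ⊆ closure A)
    (hA : ∀ x ∈ A, (NHpt x).Nonempty) : ¬ IsCompact (Set.univ : Set M) := by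
  intro hc
  obtain ⟨_, hM⟩ := hM
  choose V hxV hV using hM
  obtain ⟨t, ht⟩ := hc.elim_finite_subcover V (fun x => (hV x).1)
    (fun x _ => mem_iUnion.2 ⟨x, hxV x⟩)
  have key : ∀ s : Finset M, IsClosed (⋃ i ∈ s, frontier (V i)) ∧
      interior (⋃ i ∈ s, frontier (V i)) = ∅ := by
    classical
    intro s
    induction s using Finset.induction_on with
    | empty => simp
    | insert a s _ ih =>
      rw [Finset.set_biUnion_insert]
      refine ⟨isClosed_frontier.union ih.1, ?_⟩
      rw [interior_union_isClosed_of_interior_empty isClosed_frontier ih.2]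
      rw [← frontier_compl]
      exact interior_frontier (hV a).1.isClosed_compl
  have hsub : A ⊆ ⋃ i ∈ t, frontier (V i) := by
    intro x hx
    obtain ⟨y, x', hx', hne, hxy⟩ := hA x hx
    rw [mem_singleton_iff] at hx'
    subst hx'
    obtain ⟨i, hi, hyi⟩ := mem_iUnion₂.1 (ht (mem_univ y))
    refine mem_iUnion₂.2 ⟨i, hi, ?_⟩
    rw [(hV i).1.frontier_eq]
    refine ⟨mem_closure_iff.2 fun W hW hxW => ?_, fun hxi => ?_⟩
    · rw [inter_comm]
      exact hxy _ _ (hV i).1 hW hyi hxW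
    · obtain ⟨e⟩ := (hV i).2
      haveI : T2Space (V i) := e.isEmbedding.t2Space
      obtain ⟨P, Q, hP, hQ, hyP, hxQ, hd⟩ := t2_separation
        (x := (⟨y, hyi⟩ : V i)) (y := ⟨x', hxi⟩) (fun h => hne (congrArg Subtype.val h))
      obtain ⟨z, ⟨p, hp, rfl⟩, ⟨q, hq, hqp⟩⟩ := hxy _ _
        ((hV i).1.isOpenMap_subtype_val P hP) ((hV i).1.isOpenMap_subtype_val Q hQ)
        ⟨_, hyP, rfl⟩ ⟨_, hxQ, rfl⟩
      rw [Subtype.val_injective hqp] at hq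
      exact disjoint_left.1 hd hp hq
  have h1 : U ⊆ ⋃ i ∈ t, frontier (V i) :=
    hdense.trans ((key t).1.closure_subset_iff.2 hsub)
  have h2 := interior_maximal h1 hU.1
  rw [(key t).2] at h2
  obtain ⟨e⟩ := hU.2
  exact h2 (e.symm 0).2

/-- A manifold containing a subset `A` dense in an Euclidean subset
with `NH(x) ≠ ∅` for all `x ∈ A` is not quasi-compact; in particular no
everywhere non-Hausdorff manifold is quasi-compact. -/
theorem stmt14 {M : Type u} [TopologicalSpace M] (n : ℕ) (hM : IsNManifold M n)
    (U A : Set M) (hU : IsEuclidean n U) (hAU : A ⊆ U) (hdense : U ⊆ closure A)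
    (hA : ∀ x ∈ A, (NHpt x).Nonempty) :
    ¬ IsCompact (Set.univ : Set M) ∧
      ∀ (N : Type u) (_ : TopologicalSpace N), IsNManifold N n →
        (∀ x : N, (NHpt x).Nonempty) → ¬ IsCompact (Set.univ : Set N) := by
  refine ⟨aux14 n hM U A hU hdense hA, fun N _ hN hb => ?_⟩
  obtain ⟨x⟩ := hN.1.toNonempty
  obtain ⟨W, -, hW⟩ := hN.2 x
  exact aux14 n hN W W hW subset_closure fun x _ => hb x
end

section
/- Let M be an n-manifold and K ⊆ M a quasi-compact subset with NH(K) ∩ K = ∅. Then there is an open subset U of M which is Hausdorff in the subspace topology and contains K. -/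
open Set Topology TopologicalSpace

universe u

/-- A quasi-compact subset `K` of a manifold with `NH(K) ∩ K = ∅`
is contained in an open Hausdorff subset. -/
theorem stmt15 {M : Type u} [TopologicalSpace M] (n : ℕ) (hM : IsNManifold M n)
    (K : Set M) (hK : IsCompact K) (hNH : NH K ∩ K = ∅) :
    ∃ U : Set M, IsOpen U ∧ T2Space U ∧ K ⊆ U := by
  have hopen : IsOpen {p : M × M | ¬ Bump p.1 p.2} := by
    rw [isOpen_iff_forall_mem_open]
    rintro ⟨x, y⟩ hp
    by_cases hxy : x = y
    · subst hxy
      obtain ⟨V, hxV, hV, ⟨e⟩⟩ := hM.2 x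
      refine ⟨V ×ˢ V, ?_, hV.prod hV, ⟨hxV, hxV⟩⟩
      rintro ⟨a, b⟩ ⟨ha, hb⟩ ⟨hab, hB⟩
      haveI : T2Space V := e.symm.t2Space
      obtain ⟨A, B, hA, hB', haA, hbB, hd⟩ := t2_separation
        (show (⟨a, ha⟩ : V) ≠ ⟨b, hb⟩ from fun h => hab (congrArg Subtype.val h))
      obtain ⟨z, ⟨z1, hz1, rfl⟩, ⟨z2, hz2, h2⟩⟩ := hB _ _
        (hV.isOpenMap_subtype_val A hA) (hV.isOpenMap_subtype_val B hB')
        ⟨_, haA, rfl⟩ ⟨_, hbB, rfl⟩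
      have h3 : z2 = z1 := Subtype.ext h2
      subst h3
      exact Set.disjoint_left.1 hd hz1 hz2
    · have h : ∃ A B : Set M, IsOpen A ∧ IsOpen B ∧ x ∈ A ∧ y ∈ B ∧ ¬ (A ∩ B).Nonempty := by
        by_contra hc
        refine hp ⟨hxy, fun A B hA hB hx hy => ?_⟩
        by_contra hn
        exact hc ⟨A, B, hA, hB, hx, hy, hn⟩
      obtain ⟨A, B, hA, hB, hx, hy, hn⟩ := h
      refine ⟨A ×ˢ B, ?_, hA.prod hB, ⟨hx, hy⟩⟩
      rintro ⟨a, b⟩ ⟨ha, hb⟩ ⟨_, h⟩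
      exact hn (h A B hA hB ha hb)
  have hKK : K ×ˢ K ⊆ {p : M × M | ¬ Bump p.1 p.2} := by
    rintro ⟨a, b⟩ ⟨ha, hb⟩ h
    have : a ∈ NH K ∩ K := ⟨⟨b, hb, h⟩, ha⟩
    rw [hNH] at this
    exact this
  obtain ⟨U, V, hU, hV, hKU, hKV, hUV⟩ := generalized_tube_lemma hK hK hopen hKK
  refine ⟨U ∩ V, hU.inter hV, ⟨?_⟩, subset_inter hKU hKV⟩
  rintro ⟨x, hx⟩ ⟨y, hy⟩ hxy
  have hnb : ¬ Bump x y := hUV (show (x, y) ∈ U ×ˢ V from ⟨hx.1, hy.2⟩)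
  by_contra hc
  refine hnb ⟨fun h => hxy (Subtype.ext h), fun A B hA hB hxA hyB => ?_⟩
  by_contra hn
  refine hc ⟨Subtype.val ⁻¹' A, Subtype.val ⁻¹' B, hA.preimage continuous_subtype_val,
    hB.preimage continuous_subtype_val, hxA, hyB, ?_⟩
  exact Set.disjoint_left.2 fun z hz1 hz2 => hn ⟨z, hz1, hz2⟩
end

section
/- Let M be an n-manifold and V ⊆ U ⊆ M with U and V open Hausdorff subsets. If (closure of V) ∩ U is quasi-compact, then (closure of V) − U ⊆ NH((closure of V) ∩ U). -/
open Set Topology TopologicalSpace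

universe u

/-- For open Hausdorff `V ⊆ U` in a manifold with `closure V ∩ U`
quasi-compact, `closure V − U ⊆ NH (closure V ∩ U)`. -/
theorem stmt16 {M : Type u} [TopologicalSpace M] (n : ℕ) (hM : IsNManifold M n)
    (U V : Set M) (hVU : V ⊆ U) (hUopen : IsOpen U) (hUT2 : T2Space U)
    (hVopen : IsOpen V) (hVT2 : T2Space V)
    (hcpt : IsCompact (closure V ∩ U)) :
    closure V \ U ⊆ NH (closure V ∩ U) := by
  rintro y ⟨hyV, hyU⟩
  have hne : (𝓝 y ⊓ Filter.principal V).NeBot := mem_closure_iff_clusterPt.1 hyV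
  obtain ⟨x, hx, hcx⟩ := hcpt (f := 𝓝 y ⊓ Filter.principal V)
    (inf_le_right.trans (Filter.principal_mono.2 fun z hz => ⟨subset_closure hz, hVU hz⟩))
  refine ⟨x, hx, fun h => hyU (h ▸ hx.2), fun A B hA hB hyA hxB => ?_⟩
  have hne2 : (𝓝 x ⊓ (𝓝 y ⊓ Filter.principal V)).NeBot := hcx
  have hmem : A ∩ B ∈ 𝓝 x ⊓ (𝓝 y ⊓ Filter.principal V) :=
    Filter.inter_mem
      (Filter.mem_inf_of_right (Filter.mem_inf_of_left (hA.mem_nhds hyA)))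
      (Filter.mem_inf_of_left (hB.mem_nhds hxB))
  exact hne2.nonempty_of_mem hmem
end

section
/- Let I be an index type, let X_i be a topological space for each i ∈ I, and let X = Π_{i∈I} X_i carry the product topology. Then for every x ∈ X, NH_X(x) = {y ∈ X : y ≠ x and for every i ∈ I, either y_i = x_i or y_i and x_i are inseparable in X_i}. -/
open Set Topology TopologicalSpace

universe u

/-- In a product space, `NH(x)` consists exactly of those `y ≠ x`
such that in each coordinate, `y i = x i` or `y i ⋈ x i`. -/
theorem stmt17 {I : Type*} (X : I → Type*) [∀ i, TopologicalSpace (X i)]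
    (x : ∀ i, X i) :
    NHpt x = {y : ∀ i, X i | y ≠ x ∧ ∀ i, y i = x i ∨ Bump (y i) (x i)} := by
  classical
  ext y
  simp only [NHpt, NH, mem_singleton_iff, exists_eq_left, mem_setOf_eq]
  constructor
  · rintro ⟨hne, h⟩
    refine ⟨hne, fun i => ?_⟩
    by_cases hi : y i = x i
    · exact Or.inl hi
    · refine Or.inr ⟨hi, fun U V hU hV hyU hxV => ?_⟩
      obtain ⟨z, hz1, hz2⟩ := h ((fun z => z i) ⁻¹' U) ((fun z => z i) ⁻¹' V)
        (hU.preimage (continuous_apply i)) (hV.preimage (continuous_apply i)) hyU hxV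
      exact ⟨z i, hz1, hz2⟩
  · rintro ⟨hne, h⟩
    refine ⟨hne, fun U V hU hV hyU hxV => ?_⟩
    obtain ⟨s, u, hu, hsu⟩ := isOpen_pi_iff.1 hU y hyU
    obtain ⟨t, v, hv, htv⟩ := isOpen_pi_iff.1 hV x hxV
    have key : ∀ i, ∃ z : X i, (i ∈ s → z ∈ u i) ∧ (i ∈ t → z ∈ v i) := by
      intro i
      by_cases hs : i ∈ s
      · by_cases ht : i ∈ t
        · rcases h i with e | b
          · exact ⟨y i, fun _ => (hu i hs).2, fun _ => e ▸ (hv i ht).2⟩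
          · obtain ⟨z, h1, h2⟩ := b.2 _ _ (hu i hs).1 (hv i ht).1 (hu i hs).2 (hv i ht).2
            exact ⟨z, fun _ => h1, fun _ => h2⟩
        · exact ⟨y i, fun _ => (hu i hs).2, fun h' => absurd h' ht⟩
      · exact ⟨x i, fun h' => absurd h' hs, fun h' => (hv i h').2⟩
    choose z hz using key
    exact ⟨z, hsu fun i hi => (hz i).1 hi, htv fun i hi => (hz i).2 hi⟩
end

section
/- Let M be an n-manifold and N ⊆ M a subset such that every family of at most ℵ₁ open subsets of M covering N has a countable subfamily covering N. Then the subspace N is hereditarily Lindelöf. -/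
open Set Topology TopologicalSpace

universe u

/-- A subset `N` of a manifold such that every cover of `N` by at
most `ℵ₁` open sets has a countable subcover is hereditarily Lindelöf. -/
theorem stmt18 {M : Type u} [TopologicalSpace M] (n : ℕ) (hM : IsNManifold M n)
    (N : Set M)
    (hN : ∀ (ι : Type u) (U : ι → Set M), Cardinal.mk ι ≤ Cardinal.aleph 1 →
      (∀ i, IsOpen (U i)) → N ⊆ ⋃ i, U i →
        ∃ J : Set ι, J.Countable ∧ N ⊆ ⋃ i ∈ J, U i) :
    HereditarilyLindelofSpace N := by
  obtain ⟨hconn, hch⟩ := hM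
  choose U hU hE using hch
  have hne : Nonempty M := hconn.toNonempty
  have hLin : ∀ y, ∀ A ⊆ U y, IsLindelof A := by
    intro y A hA
    obtain ⟨ho, ⟨e⟩⟩ := hE y
    have : SecondCountableTopology (U y) := e.isInducing.secondCountableTopology
    have h1 : IsLindelof ((↑) ⁻¹' A : Set (U y)) := HereditarilyLindelofSpace.isLindelof _
    have h2 := h1.image continuous_subtype_val
    rwa [Subtype.image_preimage_coe, inter_eq_right.2 hA] at h2
  by_cases hcov : ∃ S : Set M, S.Countable ∧ N ⊆ ⋃ y ∈ S, U y
  · obtain ⟨S, hS, hNS⟩ := hcov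
    refine ⟨fun A _ => ?_⟩
    rw [Subtype.isLindelof_iff]
    have : ((↑) '' A : Set M) = ⋃ y ∈ S, ((↑) '' A : Set M) ∩ U y := by
      rw [← inter_iUnion₂, eq_comm, inter_eq_left]
      rintro _ ⟨a, -, rfl⟩
      exact hNS a.2
    rw [this]
    exact hS.isLindelof_biUnion fun y _ => hLin y _ inter_subset_right
  exfalso
  have hpick : ∀ S : Set M, ∃ p : M, S.Countable → p ∈ N ∧ ∀ y ∈ S, p ∉ U y := by
    intro S
    by_cases hS : S.Countable
    · have : ¬ N ⊆ ⋃ y ∈ S, U y := fun h => hcov ⟨S, hS, h⟩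
      obtain ⟨p, hp, hp'⟩ := not_subset.1 this
      refine ⟨p, fun _ => ⟨hp, fun y hy hpy => hp' ?_⟩⟩
      exact mem_biUnion hy hpy
    · exact ⟨Classical.arbitrary M, fun h => absurd h hS⟩
  choose g hg using hpick
  let I : Type u := (Cardinal.aleph.{u} 1).ord.ToType
  have hcard : Cardinal.mk I = Cardinal.aleph 1 := Cardinal.mk_ord_toType _
  have hIio : ∀ i : I, (Iio i).Countable := fun i => by
    rw [Cardinal.countable_iff_lt_aleph_one]
    exact Cardinal.mk_Iio_toType_ord_lt i
  have hbd : ∀ J : Set I, J.Countable → ∃ d : I, ∀ j ∈ J, j < d := by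
    intro J hJ
    by_contra! h
    have h1 : (⋃ j ∈ J, Iic j : Set I) = univ := by
      refine eq_univ_of_forall fun d => ?_
      obtain ⟨j, hj, hd⟩ := h d
      exact mem_biUnion hj hd
    have h2 : (⋃ j ∈ J, Iic j : Set I).Countable := hJ.biUnion fun j _ => by
      rw [← Iio_insert]
      exact (hIio j).insert j
    rw [h1, Cardinal.countable_iff_lt_aleph_one, Cardinal.mk_univ, hcard] at h2
    exact lt_irrefl _ h2
  let x : I → M := (wellFounded_lt (α := I)).fix
    (fun a ih => g (range fun b : Iio a => ih b.1 b.2))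
  have hx : ∀ a, x a = g (range fun b : Iio a => x b.1) := fun a =>
    (wellFounded_lt (α := I)).fix_eq _ a
  have hxp : ∀ a, x a ∈ N ∧ ∀ b < a, x a ∉ U (x b) := by
    intro a
    have : Countable (Iio a) := (hIio a).to_subtype
    have h := hg (range fun b : Iio a => x b.1) (countable_range _)
    rw [← hx] at h
    exact ⟨h.1, fun b hb => h.2 _ ⟨⟨b, hb⟩, rfl⟩⟩
  obtain ⟨J, hJ, hNJ⟩ := hN I (fun a => (closure (x '' Ici a))ᶜ) hcard.le
    (fun a => isClosed_closure.isOpen_compl) (by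
      intro y _
      obtain ⟨J, hJ, hc⟩ := (hLin y (U y ∩ range x) inter_subset_left).elim_countable_subcover
        (fun a => U (x a)) (fun a => (hE _).1) (by
          rintro _ ⟨-, a, rfl⟩
          exact mem_iUnion.2 ⟨a, hU _⟩)
      obtain ⟨d, hd⟩ := hbd J hJ
      refine mem_iUnion.2 ⟨d, fun hy => ?_⟩
      obtain ⟨_, hz, a, ha, rfl⟩ := mem_closure_iff.1 hy (U y) (hE y).1 (hU y)
      obtain ⟨j, hj, hm⟩ := mem_iUnion₂.1 (hc ⟨hz, a, rfl⟩)
      exact (hxp a).2 j ((hd j hj).trans_le ha) hm)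
  obtain ⟨d, hd⟩ := hbd J hJ
  obtain ⟨j, hj, hm⟩ := mem_iUnion₂.1 (hNJ (hxp d).1)
  exact hm (subset_closure ⟨d, (hd j hj).le, rfl⟩)
end

section
/- Let M be an n-manifold. Then M is hereditarily separable if and only if M contains no uncountable discrete subset. -/
open Set Topology TopologicalSpace

universe u

theorem stmt19_aux {M : Type u} [TopologicalSpace M] (A : Set M)
    (hloc : ∀ x : M, ∃ W : Set M, IsOpen W ∧ x ∈ W ∧
      ∃ D : Set M, D ⊆ A ∧ D.Countable ∧ W ∩ A ⊆ closure D)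
    (h : ∀ S : Set M, DiscreteTopology S → S.Countable) :
    ∃ D : Set M, D ⊆ A ∧ D.Countable ∧ A ⊆ closure D := by
  by_contra hA
  push Not at hA
  let Q : Set (Set (M × Set M)) := {P | (∀ p ∈ P, p.1 ∈ A ∧ IsOpen p.2 ∧ p.1 ∈ p.2 ∧
      ∃ D : Set M, D ⊆ A ∧ D.Countable ∧ p.2 ∩ A ⊆ closure D) ∧
      ∀ p ∈ P, ∀ q ∈ P, q.1 ∈ p.2 → p = q}
  obtain ⟨P, hP⟩ : ∃ P, Maximal (fun P => P ∈ Q) P := by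
    refine zorn_subset Q ?_
    intro c hc hch
    refine ⟨⋃₀ c, ⟨?_, ?_⟩, fun s hs => subset_sUnion_of_mem hs⟩
    · rintro p ⟨s, hs, hp⟩
      exact (hc hs).1 p hp
    · rintro p ⟨s, hs, hp⟩ q ⟨t, ht, hq⟩ hqp
      rcases hch.total hs ht with hst | hts
      · exact (hc ht).2 p (hst hp) q hq hqp
      · exact (hc hs).2 p hp q (hts hq) hqp
  have hPQ := hP.prop
  have hinj : InjOn Prod.fst P := by
    intro p hp q hq hpq
    exact hPQ.2 p hp q hq (hpq ▸ (hPQ.1 p hp).2.2.1)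
  have hS : (Prod.fst '' P).Countable := by
    apply h
    rw [discreteTopology_subtype_iff']
    rintro _ ⟨p, hp, rfl⟩
    refine ⟨p.2, (hPQ.1 p hp).2.1, ?_⟩
    ext z
    constructor
    · rintro ⟨hz, q, hq, rfl⟩
      rw [hPQ.2 p hp q hq hz]
      rfl
    · rintro rfl
      exact ⟨(hPQ.1 p hp).2.2.1, p, hp, rfl⟩
  have hPc : P.Countable := countable_of_injective_of_countable_image hinj hS
  have hD : ∀ p : M × Set M, ∃ D : Set M, p ∈ P → D ⊆ A ∧ D.Countable ∧ p.2 ∩ A ⊆ closure D := by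
    intro p
    by_cases hp : p ∈ P
    · obtain ⟨D, hD⟩ := (hPQ.1 p hp).2.2.2
      exact ⟨D, fun _ => hD⟩
    · exact ⟨∅, fun h => absurd h hp⟩
  choose D hD using hD
  have hnot := hA (Prod.fst '' P ∪ ⋃ p ∈ P, D p)
    (by
      rintro z (⟨p, hp, rfl⟩ | hz)
      · exact (hPQ.1 p hp).1
      · simp only [mem_iUnion] at hz
        obtain ⟨p, hp, hz⟩ := hz
        exact (hD p hp).1 hz)
    (hS.union (hPc.biUnion fun p hp => (hD p hp).2.1))
  obtain ⟨y, hyA, hy⟩ := not_subset.1 hnot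
  obtain ⟨W, hWo, hyW, E, hEA, hEc, hWE⟩ := hloc y
  set C := closure (Prod.fst '' P ∪ ⋃ p ∈ P, D p) with hC
  have hV : ∀ p ∈ P, y ∉ p.2 := by
    intro p hp hyp
    exact hy (closure_mono ((subset_biUnion_of_mem (u := D) hp).trans subset_union_right)
      ((hD p hp).2.2 ⟨hyp, hyA⟩))
  have hN : ∀ p ∈ P, p.1 ∉ W ∩ Cᶜ := by
    intro p hp hpp
    exact hpp.2 (subset_closure (Or.inl ⟨p, hp, rfl⟩))
  have hins : insert (y, W ∩ Cᶜ) P ∈ Q := by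
    refine ⟨?_, ?_⟩
    · rintro p (rfl | hp)
      · exact ⟨hyA, hWo.inter isClosed_closure.isOpen_compl, ⟨hyW, hy⟩, E, hEA, hEc,
          fun z hz => hWE ⟨hz.1.1, hz.2⟩⟩
      · exact hPQ.1 p hp
    · rintro p (rfl | hp) q (rfl | hq) hqp
      · rfl
      · exact absurd hqp (hN q hq)
      · exact absurd hqp (hV p hp)
      · exact hPQ.2 p hp q hq hqp
  have hmem : (y, W ∩ Cᶜ) ∈ P := hP.le_of_ge hins (subset_insert _ _) (mem_insert _ _)
  exact hV _ hmem ⟨hyW, hy⟩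

/-- A manifold is hereditarily separable iff it has no uncountable
discrete subset. -/
theorem stmt19 {M : Type u} [TopologicalSpace M] (n : ℕ) (hM : IsNManifold M n) :
    (∀ A : Set M, SeparableSpace A) ↔
      ∀ A : Set M, DiscreteTopology A → A.Countable := by
  constructor
  · intro h A hA
    have := h A
    have hc : Countable A := TopologicalSpace.separableSpace_iff_countable.1 this
    exact hc
  · intro h A
    obtain ⟨D, hDA, hDc, hAD⟩ := stmt19_aux A (by
      intro x
      obtain ⟨U, hxU, hUo, ⟨e⟩⟩ := hM.2 x
      have : SecondCountableTopology U := e.secondCountableTopology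
      have hsc : SecondCountableTopology (U ∩ A : Set M) :=
        (Topology.IsEmbedding.inclusion (inter_subset_left : U ∩ A ⊆ U)).secondCountableTopology
      refine ⟨U, hUo, hxU, ?_⟩
      obtain ⟨t, htc, htd⟩ := TopologicalSpace.exists_countable_dense (U ∩ A : Set M)
      refine ⟨Subtype.val '' t, ?_, htc.image _, ?_⟩
      · rintro _ ⟨z, _, rfl⟩
        exact z.2.2
      · intro z hz
        have := htd ⟨z, hz⟩
        rwa [closure_subtype] at this) h
    refine ⟨⟨Subtype.val ⁻¹' D, hDc.preimage Subtype.val_injective, ?_⟩⟩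
    intro a
    rw [closure_subtype, Subtype.image_preimage_coe, inter_eq_right.2 hDA]
    exact hAD a.2
end
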